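/- Let 1 → A → U →^j G → 1 be a definable extension of definable groups. Then there is a definable section s : G → U, i.e., a definable map with j(s(g)) = g for all g ∈ G. -/

import Mathlib

open Filter Set Topology

universe u

section OMinPreamble

variable {N : Type u}

section Basic
variable [LinearOrder N]

/-- A finite union of singletons and open intervals (with possibly infinite endpoints). -/
def IsFinUnionPtsIntervals (A : Set N) : Prop :=
  ∃ (k : ℕ) (f : Fin k → Set N),
    (∀ i, (∃ a, f i = {a}) ∨ (∃ a b, f i = Set.Ioo a b) ∨ (∃ a, f i = Set.Ioi a) ∨
        (∃ b, f i = Set.Iio b) ∨ f i = Set.univ) ∧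
    A = ⋃ i, f i

/-- An o-minimal structure on the ordered set `N`: an assignment, to each arity `m`,
of a collection of "definable" subsets of `N^m`, closed under the boolean and
first-order operations, containing the order and all points (parameters), and such
that every definable subset of `N` is a finite union of points and open intervals. -/
structure Struc (N : Type u) [LinearOrder N] where
  Def : ∀ m : ℕ, Set (Fin m → N) → Prop
  def_inter : ∀ {m : ℕ} {A B : Set (Fin m → N)}, Def m A → Def m B → Def m (A ∩ B)
  def_compl : ∀ {m : ℕ} {A : Set (Fin m → N)}, Def m A → Def m Aᶜ
  def_univ : ∀ m : ℕ, Def m Set.univ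
  def_reindex : ∀ {m k : ℕ} (g : Fin m → Fin k) {A : Set (Fin m → N)},
      Def m A → Def k {x | x ∘ g ∈ A}
  def_proj : ∀ {m : ℕ} {A : Set (Fin (m + 1) → N)},
      Def (m + 1) A → Def m {x | ∃ t : N, Fin.snoc x t ∈ A}
  def_lt : Def 2 {x | x 0 < x 1}
  def_pt : ∀ a : N, Def 1 {x | x 0 = a}
  o_min : ∀ {A : Set (Fin 1 → N)}, Def 1 A →
      IsFinUnionPtsIntervals {t : N | (fun _ : Fin 1 => t) ∈ A}

/-- Index of the pair `(i,j)` in `Fin (n*m)`. -/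
def finIdx {n m : ℕ} (i : Fin n) (j : Fin m) : Fin (n * m) :=
  ⟨i.1 * m + j.1, by
    have hi := i.isLt
    have hj := j.isLt
    calc i.1 * m + j.1 < i.1 * m + m := by omega
      _ = (i.1 + 1) * m := by ring
      _ ≤ n * m := Nat.mul_le_mul hi (le_refl m)⟩

def pFst {a b : ℕ} (p : Fin (a * b)) : Fin a :=
  ⟨p.1 / b, by
    have h := p.isLt
    have hb : 0 < b := by
      rcases Nat.eq_zero_or_pos b with h0 | h0
      · subst h0; simp at h
      · exact h0
    exact (Nat.div_lt_iff_lt_mul hb).mpr h⟩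

def pSnd {a b : ℕ} (p : Fin (a * b)) : Fin b :=
  ⟨p.1 % b, by
    have h := p.isLt
    have hb : 0 < b := by
      rcases Nat.eq_zero_or_pos b with h0 | h0
      · subst h0; simp at h
      · exact h0
    exact Nat.mod_lt _ hb⟩

/-- Horner evaluation of the polynomial with coefficients `c` (constant term first)
at `x`, relative to abstract operations. -/
def polyEval {α : Type*} (add mul : α → α → α) (zero : α) {n : ℕ} (c : Fin n → α)
    (x : α) : α :=
  (List.ofFn c).foldr (fun a acc => add a (mul x acc)) zero

/-- `n`-th power relative to an abstract operation with identity `z`. -/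
def opPow {α : Type*} (op : α → α → α) (z : α) (a : α) : ℕ → α
  | 0 => z
  | n + 1 => op a (opPow op z a n)

namespace Struc
variable (S : Struc N)

/-- The function `f`, restricted to the definable set `A ⊆ N^m` and with values in
`N^n`, is definable: its graph is a definable set. -/
def DefFunOn {m n : ℕ} (A : Set (Fin m → N)) (f : (Fin m → N) → (Fin n → N)) : Prop :=
  S.Def (m + n) {z | (z ∘ Fin.castAdd n) ∈ A ∧ f (z ∘ Fin.castAdd n) = z ∘ Fin.natAdd m}

/-- A definable function of two tuple variables. -/
def DefFun2 {m n k : ℕ} (A : Set (Fin m → N)) (B : Set (Fin n → N))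
    (f : (Fin m → N) → (Fin n → N) → (Fin k → N)) : Prop :=
  S.Def (m + n + k) {z |
    (z ∘ Fin.castAdd k ∘ Fin.castAdd n) ∈ A ∧
    (z ∘ Fin.castAdd k ∘ Fin.natAdd m) ∈ B ∧
    f (z ∘ Fin.castAdd k ∘ Fin.castAdd n) (z ∘ Fin.castAdd k ∘ Fin.natAdd m) =
      z ∘ Fin.natAdd (m + n)}

/-- A definable unary function `N → N` on the set `J ⊆ N`. -/
def DefFun1 (J : Set N) (f : N → N) : Prop :=
  S.Def 2 {z | z 0 ∈ J ∧ f (z 0) = z 1}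

/-- A definable curve in `N^k` defined on the set `J ⊆ N`. -/
def DefCurve {k : ℕ} (J : Set N) (σ : N → (Fin k → N)) : Prop :=
  S.DefFunOn {x : Fin 1 → N | x 0 ∈ J} (fun x => σ (x 0))

/-- A definable function of `n` tuple variables from `A^n ⊆ (N^m)^n` to `N^k`. -/
def DefFunN {m k : ℕ} (n : ℕ) (A : Set (Fin m → N))
    (c : (Fin n → (Fin m → N)) → (Fin k → N)) : Prop :=
  S.Def (n * m + k) {z |
    (∀ i : Fin n, (fun j : Fin m => z (Fin.castAdd k (finIdx i j))) ∈ A) ∧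
    c (fun i j => z (Fin.castAdd k (finIdx i j))) = fun j => z (Fin.natAdd (n * m) j)}

end Struc

/-- The filter of neighbourhoods of the "left end" of the set `J ⊆ N`. -/
def leftEndFilter (J : Set N) : Filter N := ⨅ x ∈ J, Filter.principal (J ∩ Set.Iio x)

/-- The filter of neighbourhoods of the "right end" of the set `J ⊆ N`
(for `J` unbounded above this is "`→ +∞` inside `J`"). -/
def rightEndFilter (J : Set N) : Filter N := ⨅ x ∈ J, Filter.principal (J ∩ Set.Ioi x)

/-- `J` is an open interval, with possibly infinite endpoints. -/
def IsOpenIntervalSet (J : Set N) : Prop :=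
  (∃ a b, a < b ∧ J = Set.Ioo a b) ∨ (∃ a, J = Set.Ioi a) ∨ (∃ b, J = Set.Iio b) ∨
    J = Set.univ

end Basic

section Groups
variable [LinearOrder N] [TopologicalSpace N]

/-- The o-minimal dimension of `A ⊆ N^m`: the largest `k` such that the image of `A`
under some projection onto `k` coordinates has nonempty interior in `N^k`
(`N` carrying the order topology and `N^k` the product topology). -/
noncomputable def odim {m : ℕ} (A : Set (Fin m → N)) : ℕ :=
  sSup {k | ∃ p : Fin k → Fin m, Function.Injective p ∧
    (interior ((fun x : Fin m → N => x ∘ p) '' A)).Nonempty}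

/-- A definable group: a definable subset of `N^m` with a group operation whose graph
is definable, together with its (unique) definable manifold topology, i.e. a group
topology which agrees with the ambient topology on a large definable subset. -/
structure DefGroup (S : Struc N) (m : ℕ) where
  carrier : Set (Fin m → N)
  carrier_def : S.Def m carrier
  mul : (Fin m → N) → (Fin m → N) → (Fin m → N)
  one : Fin m → N
  inv : (Fin m → N) → (Fin m → N)
  one_mem : one ∈ carrier
  mul_mem : ∀ ⦃x y : Fin m → N⦄, x ∈ carrier → y ∈ carrier → mul x y ∈ carrier
  inv_mem : ∀ ⦃x : Fin m → N⦄, x ∈ carrier → inv x ∈ carrier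
  mul_assoc' : ∀ ⦃x y z : Fin m → N⦄, x ∈ carrier → y ∈ carrier → z ∈ carrier →
      mul (mul x y) z = mul x (mul y z)
  one_mul' : ∀ ⦃x : Fin m → N⦄, x ∈ carrier → mul one x = x
  inv_mul' : ∀ ⦃x : Fin m → N⦄, x ∈ carrier → mul (inv x) x = one
  mul_graph_def : S.DefFun2 carrier carrier mul
  inv_graph_def : S.DefFunOn carrier inv
  top : TopologicalSpace (Fin m → N)
  contMul : @ContinuousOn ((Fin m → N) × (Fin m → N)) (Fin m → N)
      (@instTopologicalSpaceProd _ _ top top) top (fun p => mul p.1 p.2)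
      (carrier ×ˢ carrier)
  contInv : @ContinuousOn (Fin m → N) (Fin m → N) top top inv carrier
  pillay : ∃ V : Set (Fin m → N), V ⊆ carrier ∧ S.Def m V ∧
      (carrier \ V = ∅ ∨ odim (carrier \ V) < odim carrier) ∧
      (∃ O : Set (Fin m → N), IsOpen[top] O ∧ O ∩ carrier = V) ∧
      ∀ x ∈ V, @nhdsWithin (Fin m → N) top x carrier = nhdsWithin x V

variable {S : Struc N}

/-- The elements of a definable group, as a type. -/
def DefGroup.Elt {m : ℕ} (G : DefGroup S m) : Type u := {x : Fin m → N // x ∈ G.carrier}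

namespace DefGroup

instance {m : ℕ} {G : DefGroup S m} : Mul G.Elt :=
  ⟨fun a b => ⟨G.mul a.1 b.1, G.mul_mem a.2 b.2⟩⟩

instance {m : ℕ} {G : DefGroup S m} : One G.Elt := ⟨⟨G.one, G.one_mem⟩⟩

instance {m : ℕ} {G : DefGroup S m} : Inv G.Elt := ⟨fun a => ⟨G.inv a.1, G.inv_mem a.2⟩⟩

instance instGroupElt {m : ℕ} {G : DefGroup S m} : Group G.Elt :=
  Group.ofLeftAxioms
    (fun a b c => Subtype.ext (G.mul_assoc' a.2 b.2 c.2))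
    (fun a => Subtype.ext (G.one_mul' a.2))
    (fun a => Subtype.ext (G.inv_mul' a.2))

variable {m : ℕ} (G : DefGroup S m)

/-- `H` is a definable subgroup of `G`. -/
def IsDefSubgroup (H : Set (Fin m → N)) : Prop :=
  H ⊆ G.carrier ∧ S.Def m H ∧ G.one ∈ H ∧
    (∀ x ∈ H, ∀ y ∈ H, G.mul x y ∈ H) ∧ (∀ x ∈ H, G.inv x ∈ H)

/-- `H` is a definable normal subgroup of `G`. -/
def IsNormalDefSubgroup (H : Set (Fin m → N)) : Prop :=
  G.IsDefSubgroup H ∧ ∀ g ∈ G.carrier, ∀ h ∈ H, G.mul (G.mul g h) (G.inv g) ∈ H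

/-- The left coset `g·H`. -/
def lcoset (g : Fin m → N) (H : Set (Fin m → N)) : Set (Fin m → N) :=
  {y | ∃ h ∈ H, y = G.mul g h}

/-- `H` has finite index in `G`: finitely many left cosets cover `G`. -/
def FiniteIndex (H : Set (Fin m → N)) : Prop :=
  ∃ F : Finset (Fin m → N), ↑F ⊆ G.carrier ∧ G.carrier ⊆ ⋃ g ∈ F, G.lcoset g H

/-- `G` is definably connected: it has no proper definable subgroup of finite index. -/
def DefinablyConnected : Prop :=
  ∀ H : Set (Fin m → N), G.IsDefSubgroup H → G.FiniteIndex H → H = G.carrier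

def IsAbelian : Prop := ∀ x ∈ G.carrier, ∀ y ∈ G.carrier, G.mul x y = G.mul y x

/-- The center of `G`, as a definable subset. -/
def center : Set (Fin m → N) :=
  {x | x ∈ G.carrier ∧ ∀ y ∈ G.carrier, G.mul x y = G.mul y x}

def TorsionFree : Prop := ∀ x : G.Elt, x ≠ 1 → ∀ n : ℕ, 0 < n → x ^ n ≠ 1

/-- `G` is definably compact: every definable continuous embedding of an open
interval into `G` has limits at both ends of the interval (with respect to the
group's definable manifold topology). -/
def DefinablyCompact : Prop :=
  ∀ J : Set N, IsOpenIntervalSet J → ∀ σ : N → (Fin m → N),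
    S.DefCurve J σ → (∀ t ∈ J, σ t ∈ G.carrier) → Set.InjOn σ J →
    @ContinuousOn N (Fin m → N) _ G.top σ J →
    (∃ c ∈ G.carrier, Filter.Tendsto σ (leftEndFilter J) (@nhds _ G.top c)) ∧
    (∃ d ∈ G.carrier, Filter.Tendsto σ (rightEndFilter J) (@nhds _ G.top d))

/-- `G` is definably semisimple: it has no infinite proper abelian definable normal
subgroup. -/
def DefinablySemisimple : Prop :=
  ¬ ∃ H : Set (Fin m → N), G.IsNormalDefSubgroup H ∧ H.Infinite ∧ H ≠ G.carrier ∧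
      ∀ x ∈ H, ∀ y ∈ H, G.mul x y = G.mul y x

/-- The product of a list of elements of `G`. -/
def listProd : List (Fin m → N) → (Fin m → N)
  | [] => G.one
  | x :: xs => G.mul x (listProd xs)

end DefGroup

/-- A definable homomorphism between definable groups. -/
def IsDefHom {m n : ℕ} (G : DefGroup S m) (H : DefGroup S n)
    (f : (Fin m → N) → (Fin n → N)) : Prop :=
  (∀ x ∈ G.carrier, f x ∈ H.carrier) ∧ S.DefFunOn G.carrier f ∧
  ∀ x ∈ G.carrier, ∀ y ∈ G.carrier, f (G.mul x y) = H.mul (f x) (f y)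

/-- `π` realizes `Q` as the quotient of the subgroup `H` of `U` by the normal
subgroup `V ⊆ H`: a definable surjective homomorphism `H → Q` with fibers the
cosets of `V` (kernel exactly `V`). -/
def IsQuotMap {m k : ℕ} (U : DefGroup S m) (H V : Set (Fin m → N)) (Q : DefGroup S k)
    (π : (Fin m → N) → (Fin k → N)) : Prop :=
  (∀ x ∈ H, π x ∈ Q.carrier) ∧ S.DefFunOn H π ∧
  (∀ x ∈ H, ∀ y ∈ H, π (U.mul x y) = Q.mul (π x) (π y)) ∧
  π '' H = Q.carrier ∧ ∀ x ∈ H, (π x = Q.one ↔ x ∈ V)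

/-- A definable extension `1 → A → U → G → 1`. -/
def IsDefExtension {mA mU mG : ℕ} (A : DefGroup S mA) (U : DefGroup S mU)
    (G : DefGroup S mG) (i : (Fin mA → N) → (Fin mU → N))
    (j : (Fin mU → N) → (Fin mG → N)) : Prop :=
  IsDefHom A U i ∧ IsDefHom U G j ∧ Set.InjOn i A.carrier ∧
  j '' U.carrier = G.carrier ∧
  ∀ u ∈ U.carrier, (j u = G.one ↔ ∃ a ∈ A.carrier, u = i a)

/-- A definable `G`-module: a definable abelian group `A` together with a definable
action of `G` on `A` by (definable) automorphisms. -/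
structure DefModule {mG mA : ℕ} (G : DefGroup S mG) (A : DefGroup S mA) where
  abelian : A.IsAbelian
  act : (Fin mG → N) → (Fin mA → N) → (Fin mA → N)
  act_mem : ∀ ⦃x a⦄, x ∈ G.carrier → a ∈ A.carrier → act x a ∈ A.carrier
  act_one : ∀ ⦃a⦄, a ∈ A.carrier → act G.one a = a
  act_mul : ∀ ⦃x y⦄, x ∈ G.carrier → y ∈ G.carrier → ∀ ⦃a⦄, a ∈ A.carrier →
      act (G.mul x y) a = act x (act y a)
  act_hom : ∀ ⦃x⦄, x ∈ G.carrier → ∀ ⦃a b⦄, a ∈ A.carrier → b ∈ A.carrier →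
      act x (A.mul a b) = A.mul (act x a) (act x b)
  act_def : S.DefFun2 G.carrier A.carrier act

/-- The module `(A, γ)` is trivial. -/
def DefModule.IsTrivial {mG mA : ℕ} {G : DefGroup S mG} {A : DefGroup S mA}
    (γ : DefModule G A) : Prop :=
  ∀ x ∈ G.carrier, ∀ a ∈ A.carrier, γ.act x a = a

/-- The definable extension `1 → A → U → G → 1` is compatible with the `G`-module
`(A, γ)`: conjugation in `U` induces the action `γ` on `A`. -/
def ExtCompatible {mG mA mU : ℕ} {G : DefGroup S mG} {A : DefGroup S mA}
    (γ : DefModule G A) (U : DefGroup S mU) (i : (Fin mA → N) → (Fin mU → N))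
    (j : (Fin mU → N) → (Fin mG → N)) : Prop :=
  ∀ u ∈ U.carrier, ∀ a ∈ A.carrier, i (γ.act (j u) a) = U.mul (U.mul u (i a)) (U.inv u)

/-- Alternating "sum" `x₁ - (x₂ - (x₃ - ⋯))` in a (multiplicatively written abelian)
definable group. -/
def altSum {k : ℕ} (A : DefGroup S k) : List (Fin k → N) → (Fin k → N)
  | [] => A.one
  | x :: xs => A.mul x (A.inv (altSum A xs))

/-- The `i`-th term (`1 ≤ i ≤ n+1`) in the coboundary formula:
`c(g₁,…,g_i g_{i+1},…,g_{n+1})` for `1 ≤ i ≤ n`, and `c(g₁,…,g_n)` for `i = n+1`. -/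
def cobTerm {mG kA : ℕ} (G : DefGroup S mG) {n : ℕ}
    (c : (Fin n → (Fin mG → N)) → (Fin kA → N))
    (g : Fin (n + 1) → (Fin mG → N)) (i : ℕ) : Fin kA → N :=
  if i ≤ n then
    c (fun j : Fin n =>
      if j.1 + 1 < i then g (Fin.castSucc j)
      else if j.1 + 1 = i then G.mul (g (Fin.castSucc j)) (g j.succ)
      else g j.succ)
  else c (fun j : Fin n => g (Fin.castSucc j))

/-- The coboundary `δb` of the definable `n`-cochain `b`:
`δb(g₁,…,g_{n+1}) = γ(g₁)(b(g₂,…,g_{n+1})) + Σ_{i=1}^{n} (−1)^i b(…,g_i g_{i+1},…)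
+ (−1)^{n+1} b(g₁,…,g_n)` (written multiplicatively in the abelian group `A`). -/
def cob {mG kA : ℕ} {G : DefGroup S mG} {A : DefGroup S kA} (γ : DefModule G A)
    {n : ℕ} (b : (Fin n → (Fin mG → N)) → (Fin kA → N))
    (g : Fin (n + 1) → (Fin mG → N)) : Fin kA → N :=
  A.mul (γ.act (g 0) (b (Fin.tail g)))
    (A.inv (altSum A (List.ofFn fun i : Fin (n + 1) => cobTerm G b g (i.1 + 1))))

/-- There is no definable bijection between `X ⊆ N^m` and `Y ⊆ N^k`. -/
def NoDefBijection (S : Struc N) {m k : ℕ} (X : Set (Fin m → N))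
    (Y : Set (Fin k → N)) : Prop :=
  ¬ ∃ f : (Fin m → N) → (Fin k → N), S.DefFunOn X f ∧ (∀ x ∈ X, f x ∈ Y) ∧
      Set.InjOn f X ∧ f '' X = Y

/-- The subgroup `W` of `U` is definably isomorphic to a (finite) direct product of
copies of the one-dimensional group `(J, op)`. -/
def IsProdOfCopies {m : ℕ} (U : DefGroup S m) (W : Set (Fin m → N)) (J : Set N)
    (op : N → N → N) : Prop :=
  ∃ (d : ℕ) (φ : (Fin m → N) → (Fin d → N)),
    S.DefFunOn W φ ∧ Set.InjOn φ W ∧ φ '' W = {z | ∀ i, z i ∈ J} ∧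
    ∀ x ∈ W, ∀ y ∈ W, φ (U.mul x y) = fun i => op (φ x i) (φ y i)

/-- `V` is the internal direct product of the list `parts` of definable subgroups
of `U`: the parts commute pairwise and every element of `V` is uniquely a product
of elements of the parts. -/
def IsInternalDPList {m : ℕ} (U : DefGroup S m) (V : Set (Fin m → N))
    (parts : List (Set (Fin m → N))) : Prop :=
  (∀ P ∈ parts, U.IsDefSubgroup P) ∧
  List.Pairwise (fun P Q => ∀ x ∈ P, ∀ y ∈ Q, U.mul x y = U.mul y x) parts ∧
  (∀ v, v ∈ V ↔ ∃ f : Fin parts.length → (Fin m → N),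
      (∀ i, f i ∈ parts.get i) ∧ v = U.listProd (List.ofFn f)) ∧
  ∀ f g : Fin parts.length → (Fin m → N),
    (∀ i, f i ∈ parts.get i) → (∀ i, g i ∈ parts.get i) →
    U.listProd (List.ofFn f) = U.listProd (List.ofFn g) → f = g

/-- `K` is a definable subgroup of `U`, equipped with its group structure and with
the submanifold topology inherited from `U`. -/
def IsDefSubgroupGrp {m : ℕ} (U K : DefGroup S m) : Prop :=
  K.carrier ⊆ U.carrier ∧ K.one = U.one ∧
  (∀ x ∈ K.carrier, ∀ y ∈ K.carrier, K.mul x y = U.mul x y) ∧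
  (∀ x ∈ K.carrier, K.inv x = U.inv x) ∧
  ∀ x ∈ K.carrier, @nhdsWithin (Fin m → N) K.top x K.carrier
      = @nhdsWithin (Fin m → N) U.top x K.carrier

/-- The abelian definable group `U` has no definably compact parts: there is a chain
of definable subgroups each of whose successive quotients is a one-dimensional
definably connected torsion-free definable group. -/
def NoCompactParts {m : ℕ} (U : DefGroup S m) : Prop :=
  ∃ (n : ℕ) (ch : Fin (n + 1) → Set (Fin m → N)),
    ch 0 = {U.one} ∧ ch (Fin.last n) = U.carrier ∧
    (∀ j, U.IsDefSubgroup (ch j)) ∧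
    (∀ j : Fin n, ch j.castSucc ⊆ ch j.succ) ∧
    ∀ j : Fin n, ∃ (k : ℕ) (Q : DefGroup S k) (π : (Fin m → N) → (Fin k → N)),
      IsQuotMap U (ch j.succ) (ch j.castSucc) Q π ∧
      odim Q.carrier = 1 ∧ Q.DefinablyConnected ∧ Q.TorsionFree

/-- `H` is the definably connected component of the identity of `G`: the smallest
definable subgroup of finite index. -/
def IsIdentityComponent {m : ℕ} (G : DefGroup S m) (H : Set (Fin m → N)) : Prop :=
  G.IsDefSubgroup H ∧ G.FiniteIndex H ∧
    ∀ H' : Set (Fin m → N), G.IsDefSubgroup H' → G.FiniteIndex H' → H ⊆ H'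

/-- A definable (not necessarily unital or associative) ring: a definable abelian
group together with a definable bi-additive multiplication. -/
structure DefRing (S : Struc N) (m : ℕ) where
  grp : DefGroup S m
  comm : grp.IsAbelian
  rmul : (Fin m → N) → (Fin m → N) → (Fin m → N)
  rmul_mem : ∀ ⦃x y⦄, x ∈ grp.carrier → y ∈ grp.carrier → rmul x y ∈ grp.carrier
  left_distrib' : ∀ ⦃x y z⦄, x ∈ grp.carrier → y ∈ grp.carrier → z ∈ grp.carrier →
      rmul x (grp.mul y z) = grp.mul (rmul x y) (rmul x z)
  right_distrib' : ∀ ⦃x y z⦄, x ∈ grp.carrier → y ∈ grp.carrier → z ∈ grp.carrier →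
      rmul (grp.mul x y) z = grp.mul (rmul x z) (rmul y z)
  rmul_graph_def : S.DefFun2 grp.carrier grp.carrier rmul

/-- `H` is a definable left ideal of the definable ring `R`. -/
def DefRing.IsLeftIdeal {m : ℕ} (R : DefRing S m) (H : Set (Fin m → N)) : Prop :=
  R.grp.IsDefSubgroup H ∧ ∀ u ∈ R.grp.carrier, ∀ h ∈ H, R.rmul u h ∈ H

/-- `π` realizes `Q` as the quotient ring of `R` by the (two-sided) ideal `V`. -/
def IsRingQuotMap {m k : ℕ} (R : DefRing S m) (V : Set (Fin m → N)) (Q : DefRing S k)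
    (π : (Fin m → N) → (Fin k → N)) : Prop :=
  IsQuotMap R.grp R.grp.carrier V Q.grp π ∧
  ∀ x ∈ R.grp.carrier, ∀ y ∈ R.grp.carrier, π (R.rmul x y) = Q.rmul (π x) (π y)

/-- The two-sided annihilator of the definable ring `R`. -/
def ringAnn {m : ℕ} (R : DefRing S m) : Set (Fin m → N) :=
  {v | v ∈ R.grp.carrier ∧
    ∀ w ∈ R.grp.carrier, R.rmul v w = R.grp.one ∧ R.rmul w v = R.grp.one}

/-- Iterated ring product `((a·x₁)·x₂)⋯`. -/
def rFold {m : ℕ} (R : DefRing S m) : (Fin m → N) → List (Fin m → N) → (Fin m → N)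
  | a, [] => a
  | a, x :: xs => rFold R (R.rmul a x) xs

/-- An o-minimal expansion of an ordered group, definable in the ambient structure:
a definable subset `J ⊆ N` with a definable ordered abelian group structure
(the induced structure on `J` being the relevant o-minimal expansion). -/
structure OMinGrpExp (S : Struc N) where
  J : Set N
  Jdef : S.Def 1 {x | x 0 ∈ J}
  add : N → N → N
  zero : N
  neg : N → N
  zero_mem : zero ∈ J
  add_mem : ∀ ⦃a b⦄, a ∈ J → b ∈ J → add a b ∈ J
  neg_mem : ∀ ⦃a⦄, a ∈ J → neg a ∈ J
  add_assoc' : ∀ ⦃a b c⦄, a ∈ J → b ∈ J → c ∈ J → add (add a b) c = add a (add b c)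
  add_comm' : ∀ ⦃a b⦄, a ∈ J → b ∈ J → add a b = add b a
  zero_add' : ∀ ⦃a⦄, a ∈ J → add zero a = a
  neg_add' : ∀ ⦃a⦄, a ∈ J → add (neg a) a = zero
  add_lt' : ∀ ⦃a b c⦄, a ∈ J → b ∈ J → c ∈ J → b < c → add a b < add a c
  add_graph_def : S.Def 3 {z | z 0 ∈ J ∧ z 1 ∈ J ∧ add (z 0) (z 1) = z 2}

namespace OMinGrpExp
variable {S : Struc N} (E : OMinGrpExp S)

/-- A subset of `J^k` bounded in `J`. -/
def BoundedSet {k : ℕ} (B : Set (Fin k → N)) : Prop :=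
  ∃ lo ∈ E.J, ∃ hi ∈ E.J, ∀ x ∈ B, ∀ i, lo ≤ x i ∧ x i ≤ hi

/-- The induced structure on `J` is semi-bounded: every definable subset of `J^k`
belongs to every family of sets (closed under the first-order operations relative
to `J`) containing the ordered group structure, all bounded definable sets, and
all definable endomorphisms of `(J, 0, +)`. -/
def SemiBounded : Prop :=
  ∀ (D : ∀ k : ℕ, Set (Fin k → N) → Prop),
    (∀ {k : ℕ} {A B : Set (Fin k → N)}, D k A → D k B → D k (A ∩ B)) →
    (∀ {k : ℕ} {A : Set (Fin k → N)}, D k A → D k ({x | ∀ i, x i ∈ E.J} \ A)) →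
    (∀ k : ℕ, D k {x | ∀ i, x i ∈ E.J}) →
    (∀ {k l : ℕ} (g : Fin k → Fin l) {A : Set (Fin k → N)}, D k A →
        D l {x | (∀ i, x i ∈ E.J) ∧ x ∘ g ∈ A}) →
    (∀ {k : ℕ} {A : Set (Fin (k + 1) → N)}, D (k + 1) A →
        D k {x | (∀ i, x i ∈ E.J) ∧ ∃ t ∈ E.J, Fin.snoc x t ∈ A}) →
    (D 2 {x | (∀ i, x i ∈ E.J) ∧ x 0 < x 1}) →
    (∀ a ∈ E.J, D 1 {x | x 0 = a}) →
    (D 3 {z | (∀ i, z i ∈ E.J) ∧ E.add (z 0) (z 1) = z 2}) →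
    (∀ {k : ℕ} {B : Set (Fin k → N)}, S.Def k B → (∀ x ∈ B, ∀ i, x i ∈ E.J) →
        E.BoundedSet B → D k B) →
    (∀ f : N → N, S.DefFun1 E.J f → (∀ a ∈ E.J, f a ∈ E.J) →
        (∀ ⦃a b⦄, a ∈ E.J → b ∈ E.J → f (E.add a b) = E.add (f a) (f b)) →
        D 2 {z | z 0 ∈ E.J ∧ z 1 ∈ E.J ∧ f (z 0) = z 1}) →
    ∀ {k : ℕ} {A : Set (Fin k → N)}, S.Def k A → (∀ x ∈ A, ∀ i, x i ∈ E.J) → D k A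

end OMinGrpExp

/-- An o-minimal expansion of a real closed field, definable in the ambient
structure: a definable subset `J ⊆ N` with a definable real closed ordered field
structure. -/
structure OMinFieldExp (S : Struc N) where
  J : Set N
  Jdef : S.Def 1 {x | x 0 ∈ J}
  add : N → N → N
  mul : N → N → N
  zero : N
  one : N
  neg : N → N
  inv : N → N
  zero_mem : zero ∈ J
  one_mem : one ∈ J
  zero_ne_one : zero ≠ one
  add_mem : ∀ ⦃a b⦄, a ∈ J → b ∈ J → add a b ∈ J
  mul_mem : ∀ ⦃a b⦄, a ∈ J → b ∈ J → mul a b ∈ J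
  neg_mem : ∀ ⦃a⦄, a ∈ J → neg a ∈ J
  inv_mem : ∀ ⦃a⦄, a ∈ J → inv a ∈ J
  add_assoc' : ∀ ⦃a b c⦄, a ∈ J → b ∈ J → c ∈ J → add (add a b) c = add a (add b c)
  add_comm' : ∀ ⦃a b⦄, a ∈ J → b ∈ J → add a b = add b a
  zero_add' : ∀ ⦃a⦄, a ∈ J → add zero a = a
  neg_add' : ∀ ⦃a⦄, a ∈ J → add (neg a) a = zero
  mul_assoc' : ∀ ⦃a b c⦄, a ∈ J → b ∈ J → c ∈ J → mul (mul a b) c = mul a (mul b c)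
  mul_comm' : ∀ ⦃a b⦄, a ∈ J → b ∈ J → mul a b = mul b a
  one_mul' : ∀ ⦃a⦄, a ∈ J → mul one a = a
  mul_inv' : ∀ ⦃a⦄, a ∈ J → a ≠ zero → mul (inv a) a = one
  distrib' : ∀ ⦃a b c⦄, a ∈ J → b ∈ J → c ∈ J →
      mul a (add b c) = add (mul a b) (mul a c)
  add_lt' : ∀ ⦃a b c⦄, a ∈ J → b ∈ J → c ∈ J → b < c → add a b < add a c
  mul_pos' : ∀ ⦃a b⦄, a ∈ J → b ∈ J → zero < a → zero < b → zero < mul a b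
  sq_root : ∀ ⦃a⦄, a ∈ J → zero ≤ a → ∃ b ∈ J, mul b b = a
  odd_root : ∀ n : ℕ, Odd n → ∀ c : Fin (n + 1) → N, (∀ i, c i ∈ J) →
      c (Fin.last n) ≠ zero → ∃ x ∈ J, polyEval add mul zero c x = zero
  add_graph_def : S.Def 3 {z | z 0 ∈ J ∧ z 1 ∈ J ∧ add (z 0) (z 1) = z 2}
  mul_graph_def : S.Def 3 {z | z 0 ∈ J ∧ z 1 ∈ J ∧ mul (z 0) (z 1) = z 2}

/-- The linearly bounded one-dimensional torsion-free definable group of an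
o-minimal expansion of a real closed field: a definable ordered torsion-free group
structure on `J` with respect to which the induced structure is linearly bounded. -/
structure LinBddGrp {S : Struc N} (E : OMinFieldExp S) where
  op : N → N → N
  z : N
  opneg : N → N
  z_mem : z ∈ E.J
  op_mem : ∀ ⦃a b⦄, a ∈ E.J → b ∈ E.J → op a b ∈ E.J
  opneg_mem : ∀ ⦃a⦄, a ∈ E.J → opneg a ∈ E.J
  op_assoc : ∀ ⦃a b c⦄, a ∈ E.J → b ∈ E.J → c ∈ E.J → op (op a b) c = op a (op b c)
  op_comm : ∀ ⦃a b⦄, a ∈ E.J → b ∈ E.J → op a b = op b a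
  z_op : ∀ ⦃a⦄, a ∈ E.J → op z a = a
  opneg_op : ∀ ⦃a⦄, a ∈ E.J → op (opneg a) a = z
  op_lt : ∀ ⦃a b c⦄, a ∈ E.J → b ∈ E.J → c ∈ E.J → b < c → op a b < op a c
  op_graph_def : S.Def 3 {w | w 0 ∈ E.J ∧ w 1 ∈ E.J ∧ op (w 0) (w 1) = w 2}
  torsion_free : ∀ a ∈ E.J, a ≠ z → ∀ n : ℕ, 0 < n → opPow op z a n ≠ z
  lin_bdd : ∀ f : N → N, S.DefFun1 E.J f → (∀ a ∈ E.J, f a ∈ E.J) →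
      ∃ r : N → N, S.DefFun1 E.J r ∧ (∀ a ∈ E.J, r a ∈ E.J) ∧
        (∀ ⦃a b⦄, a ∈ E.J → b ∈ E.J → r (op a b) = op (r a) (r b)) ∧
        ∃ cst ∈ E.J, Filter.Tendsto (fun x => op (f x) (opneg (r x)))
            (rightEndFilter E.J) (nhds cst)

/-- Multiplication of `n × n` matrices with entries in the definable field `E`. -/
def matMul {S : Struc N} (E : OMinFieldExp S) (n : ℕ) (x y : Fin (n * n) → N) :
    Fin (n * n) → N :=
  fun p =>
    (List.ofFn (fun l : Fin n =>
        E.mul (x (finIdx (pFst p) l)) (y (finIdx l (pSnd p))))).foldr E.add E.zero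

/-- The identity `n × n` matrix with entries in the definable field `E`. -/
def matId {S : Struc N} (E : OMinFieldExp S) (n : ℕ) : Fin (n * n) → N :=
  fun p => if pFst p = pSnd p then E.one else E.zero

/-- The three kinds of division algebras over a real closed field. -/
inductive DivKind : Type
  | real : DivKind
  | cplx : DivKind
  | quat : DivKind

@[reducible] def dkDim : DivKind → ℕ
  | .real => 1
  | .cplx => 2
  | .quat => 4

/-- Multiplication in the division algebra of kind `d` (the field itself, the field
with `√-1` adjoined, or the quaternions), with coordinates in the definable field
`E`. -/
def dkMul {S : Struc N} (E : OMinFieldExp S) :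
    (d : DivKind) → (Fin (dkDim d) → N) → (Fin (dkDim d) → N) → (Fin (dkDim d) → N)
  | .real => fun x y _ => E.mul (x 0) (y 0)
  | .cplx => fun x y i =>
      if i.1 = 0 then E.add (E.mul (x 0) (y 0)) (E.neg (E.mul (x 1) (y 1)))
      else E.add (E.mul (x 0) (y 1)) (E.mul (x 1) (y 0))
  | .quat => fun x y i =>
      if i.1 = 0 then
        E.add (E.mul (x 0) (y 0)) (E.neg (E.add (E.mul (x 1) (y 1))
          (E.add (E.mul (x 2) (y 2)) (E.mul (x 3) (y 3)))))
      else if i.1 = 1 then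
        E.add (E.mul (x 0) (y 1)) (E.add (E.mul (x 1) (y 0))
          (E.add (E.mul (x 2) (y 3)) (E.neg (E.mul (x 3) (y 2)))))
      else if i.1 = 2 then
        E.add (E.mul (x 0) (y 2)) (E.add (E.neg (E.mul (x 1) (y 3)))
          (E.add (E.mul (x 2) (y 0)) (E.mul (x 3) (y 1))))
      else
        E.add (E.mul (x 0) (y 3)) (E.add (E.mul (x 1) (y 2))
          (E.add (E.neg (E.mul (x 2) (y 1))) (E.mul (x 3) (y 0))))

/-- Multiplication in the matrix algebra `M_k(D)` where `D` is the division algebra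
of kind `d` over the definable field `E`; elements are encoded as tuples in
`N^(k·k·dim D)`. -/
def matAlgMul {S : Struc N} (E : OMinFieldExp S) (d : DivKind) (k : ℕ)
    (x y : Fin (k * k * dkDim d) → N) : Fin (k * k * dkDim d) → N :=
  fun p =>
    ((List.ofFn (fun l : Fin k =>
        dkMul E d (fun cc => x (finIdx (finIdx (pFst (pFst p)) l) cc))
          (fun cc => y (finIdx (finIdx l (pSnd (pFst p))) cc)))).foldr
      (fun v w i => E.add (v i) (w i)) (fun _ => E.zero)) (pSnd p)

/-- `(F, +, ·, 0, 1, −, ⁻¹, <)` is a real closed ordered field structure on the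
subset `F ⊆ N^k`. -/
def IsRCFOn {k : ℕ} (F : Set (Fin k → N))
    (fadd fmul : (Fin k → N) → (Fin k → N) → (Fin k → N)) (fzero fone : Fin k → N)
    (fneg finv : (Fin k → N) → (Fin k → N))
    (flt : (Fin k → N) → (Fin k → N) → Prop) : Prop :=
  fzero ∈ F ∧ fone ∈ F ∧ fzero ≠ fone ∧
  (∀ x ∈ F, ∀ y ∈ F, fadd x y ∈ F ∧ fmul x y ∈ F) ∧
  (∀ x ∈ F, fneg x ∈ F ∧ finv x ∈ F) ∧
  (∀ x ∈ F, ∀ y ∈ F, ∀ z ∈ F, fadd (fadd x y) z = fadd x (fadd y z)) ∧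
  (∀ x ∈ F, ∀ y ∈ F, fadd x y = fadd y x) ∧
  (∀ x ∈ F, fadd fzero x = x) ∧
  (∀ x ∈ F, fadd (fneg x) x = fzero) ∧
  (∀ x ∈ F, ∀ y ∈ F, ∀ z ∈ F, fmul (fmul x y) z = fmul x (fmul y z)) ∧
  (∀ x ∈ F, ∀ y ∈ F, fmul x y = fmul y x) ∧
  (∀ x ∈ F, fmul fone x = x) ∧
  (∀ x ∈ F, x ≠ fzero → fmul (finv x) x = fone) ∧
  (∀ x ∈ F, ∀ y ∈ F, ∀ z ∈ F, fmul x (fadd y z) = fadd (fmul x y) (fmul x z)) ∧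
  (∀ x ∈ F, ∀ y ∈ F, flt x y ∨ x = y ∨ flt y x) ∧
  (∀ x ∈ F, ¬ flt x x) ∧
  (∀ x ∈ F, ∀ y ∈ F, ∀ z ∈ F, flt x y → flt y z → flt x z) ∧
  (∀ x ∈ F, ∀ y ∈ F, ∀ z ∈ F, flt y z → flt (fadd x y) (fadd x z)) ∧
  (∀ x ∈ F, ∀ y ∈ F, flt fzero x → flt fzero y → flt fzero (fmul x y)) ∧
  (∀ x ∈ F, (flt fzero x ∨ x = fzero) → ∃ y ∈ F, fmul y y = x) ∧
  (∀ n : ℕ, Odd n → ∀ c : Fin (n + 1) → (Fin k → N), (∀ i, c i ∈ F) →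
      c (Fin.last n) ≠ fzero → ∃ x ∈ F, polyEval fadd fmul fzero c x = fzero)

end Groups

end OMinPreamble

/-!
In a group `G` the product `x * γ(s)⁻¹ * γ(t) * y` equals `x * y` exactly when `γ(s) = γ(t)`, and
for generic `x` and `y` it is continuous in `s` and in `t`. Along a definable curve `γ` in `G` this
is enough to select definably a point of every small interval, so `G` contains the injective image
of a box of dimension `dim G` on which definable choice holds.

For dimension reasons infinitely many translates of this image cannot be pairwise disjoint. Hence,
when intervals depend definably on `g ∈ G`, a point of the interval of `g` can be found among the
endpoints of the intervals of the elements `g * u * v⁻¹`, with `u` and `v` in the box, unless the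
endpoint at `g` itself takes one of finitely many exceptional values. This gives definable choice
for families indexed by `G`, and the fibres of `j` form such a family.
-/

section DefinableCalculus

variable {N : Type u}

/-- A sort of the structure: a type identified with a cartesian power of `N`. The coordinates let
`fun_prop` handle definability over products without any reindexing by hand. -/
class DefSort (N : Type u) (Γ : Type u) where
  dim : ℕ
  coords : Γ ≃ (Fin dim → N)

/-- A type that may be the target of a definable function: a sort, where `rel v y` says that `v` is
the coordinate vector of `y`, or `Prop`, where there are no coordinates and `rel v p` is `p`.
This makes definability of functions and of predicates a single notion. -/
class DefTarget (N : Type u) (Δ : Type*) where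
  dim : ℕ
  rel : (Fin dim → N) → Δ → Prop

instance : DefSort N N := ⟨1, (Equiv.funUnique (Fin 1) N).symm⟩

instance {m : ℕ} : DefSort N (Fin m → N) := ⟨m, Equiv.refl _⟩

instance {Γ Δ : Type u} [DefSort N Γ] [DefSort N Δ] : DefSort N (Γ × Δ) :=
  ⟨DefSort.dim N Γ + DefSort.dim N Δ,
    (Equiv.prodCongr DefSort.coords DefSort.coords).trans (Fin.appendEquiv _ _)⟩

instance {Δ : Type u} [DefSort N Δ] : DefTarget N Δ :=
  ⟨DefSort.dim N Δ, fun v y => v = DefSort.coords y⟩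

instance : DefTarget N Prop := ⟨0, fun _ p => p⟩

/-- Maps between sorts which are given by selecting coordinates; definable predicates may be
reindexed along them before composition with arbitrary definable maps is available. -/
def IsCoord (N : Type u) {Γ Δ : Type u} [DefSort N Γ] [DefSort N Δ] (F : Γ → Δ) : Prop :=
  ∃ g : Fin (DefSort.dim N Δ) → Fin (DefSort.dim N Γ),
    ∀ x, (DefSort.coords (F x) : _ → N) = DefSort.coords x ∘ g

variable {Γ Δ E : Type u} [DefSort N Γ] [DefSort N Δ] [DefSort N E]

lemma DefSort.coords_prod (p : Γ × Δ) :
    (DefSort.coords p : _ → N) = Fin.append (DefSort.coords p.1) (DefSort.coords p.2) := rfl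

namespace IsCoord

lemma id : IsCoord N (fun x : Γ => x) := ⟨fun i => i, fun _ => rfl⟩

lemma comp {g : Δ → E} {f : Γ → Δ} (hg : IsCoord N g) (hf : IsCoord N f) :
    IsCoord N (fun x => g (f x)) := by
  obtain ⟨a, ha⟩ := hg
  obtain ⟨b, hb⟩ := hf
  exact ⟨b ∘ a, fun x => by rw [ha, hb]; rfl⟩

lemma fst {f : Γ → Δ × E} (hf : IsCoord N f) : IsCoord N (fun x => (f x).1) := by
  refine comp (g := Prod.fst) ⟨Fin.castAdd _, fun x => ?_⟩ hf
  ext i; simp [DefSort.coords_prod]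

lemma snd {f : Γ → Δ × E} (hf : IsCoord N f) : IsCoord N (fun x => (f x).2) := by
  refine comp (g := Prod.snd) ⟨Fin.natAdd _, fun x => ?_⟩ hf
  ext i; simp [DefSort.coords_prod]

lemma prodMk {f : Γ → Δ} {g : Γ → E} (hf : IsCoord N f) (hg : IsCoord N g) :
    IsCoord N (fun x => (f x, g x)) := by
  obtain ⟨a, ha⟩ := hf
  obtain ⟨b, hb⟩ := hg
  refine ⟨Fin.addCases a b, fun x => ?_⟩
  rw [DefSort.coords_prod, ha, hb]
  ext i
  induction i using Fin.addCases <;> simp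

lemma apply {m : ℕ} {f : Γ → Fin m → N} (i : Fin m) (hf : IsCoord N f) :
    IsCoord N (fun x => f x i) := by
  obtain ⟨a, ha⟩ := hf
  exact ⟨fun _ => a i, fun x => funext fun _ => congrFun (ha x) i⟩

lemma coord (i : Fin (DefSort.dim N Γ)) : IsCoord N (fun x : Γ => (DefSort.coords x i : N)) :=
  ⟨fun _ => i, fun _ => rfl⟩

lemma pi {m : ℕ} {f : Γ → Fin m → N} (hf : ∀ i, IsCoord N (fun x => f x i)) :
    IsCoord N f := by
  choose a ha using hf
  exact ⟨fun i => a i 0, fun x => funext fun i => congrFun (ha i x) 0⟩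

end IsCoord

section Definability

variable [LinearOrder N]

/-- Definability of a predicate on a sort, in coordinates. -/
def Struc.DefPred (S : Struc N) {Γ : Type u} [DefSort N Γ] (P : Γ → Prop) : Prop :=
  S.Def (DefSort.dim N Γ) {x | P (DefSort.coords.symm x)}

/-- Definability of a function between sorts, or of a predicate on a sort. -/
@[fun_prop]
def Struc.Definable (S : Struc N) {Γ : Type u} {Δ : Type*} [DefSort N Γ] [DefTarget N Δ]
    (F : Γ → Δ) : Prop :=
  S.DefPred (fun p : Γ × (Fin (DefTarget.dim N Δ) → N) => DefTarget.rel p.2 (F p.1))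

variable {S : Struc N}

namespace Struc.DefPred

lemma reindex {P : Δ → Prop} {F : Γ → Δ} (hP : S.DefPred P) (hF : IsCoord N F) :
    S.DefPred (fun x => P (F x)) := by
  obtain ⟨g, hg⟩ := hF
  have := S.def_reindex g hP
  unfold Struc.DefPred
  convert this using 3 with x
  simp only [mem_ofPred_eq]
  rw [← DefSort.coords.apply_symm_apply x, ← hg]
  simp

lemma and {P Q : Γ → Prop} (hP : S.DefPred P) (hQ : S.DefPred Q) : S.DefPred (fun x => P x ∧ Q x) :=
  S.def_inter hP hQ

lemma not {P : Γ → Prop} (hP : S.DefPred P) : S.DefPred (fun x => ¬ P x) := S.def_compl hP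

lemma true' : S.DefPred (fun _ : Γ => True) := S.def_univ _

lemma congr {P Q : Γ → Prop} (hP : S.DefPred P) (h : ∀ x, Q x ↔ P x) : S.DefPred Q := by
  rwa [show Q = P from funext fun x => propext (h x)]

lemma forall_fin {k : ℕ} {P : Fin k → Γ → Prop} (hP : ∀ i, S.DefPred (P i)) :
    S.DefPred (fun x => ∀ i, P i x) := by
  induction k with
  | zero => simpa using true'
  | succ k ih =>
    simp_rw [Fin.forall_fin_succ]
    exact (hP 0).and (ih fun i => hP i.succ)

lemma def_exists_append {a b : ℕ} {A : Set (Fin (a + b) → N)} (hA : S.Def (a + b) A) :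
    S.Def a {x | ∃ y : Fin b → N, Fin.append x y ∈ A} := by
  induction b with
  | zero =>
    convert S.def_reindex (Fin.cast (add_zero a)) hA using 2
    ext x
    simp only [Fin.append_right_nil _ _ rfl, exists_const]
  | succ b ih =>
    convert ih (S.def_proj hA) using 2
    ext x
    simp only [mem_ofPred_eq]
    constructor
    · rintro ⟨y, hy⟩
      refine ⟨Fin.init y, y (Fin.last b), ?_⟩
      rwa [← Fin.append_snoc, Fin.snoc_init_self]
    · rintro ⟨y, t, h⟩
      exact ⟨Fin.snoc y t, by rwa [Fin.append_snoc]⟩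

lemma exists' {P : Γ × Δ → Prop} (hP : S.DefPred P) : S.DefPred (fun x => ∃ y, P (x, y)) := by
  have := def_exists_append (a := DefSort.dim N Γ) (b := DefSort.dim N Δ) hP
  unfold Struc.DefPred
  convert this using 3 with x
  change (∃ y, P (DefSort.coords.symm x, y)) ↔
    ∃ y, P (((Fin.appendEquiv _ _).symm (Fin.append x y)).map
      DefSort.coords.symm DefSort.coords.symm)
  refine Iff.trans ?_ (DefSort.coords (N := N) (Γ := Δ)).exists_congr_right
  refine exists_congr fun y => ?_
  rw [show Fin.append x (DefSort.coords y) = Fin.appendEquiv _ _ (x, DefSort.coords y) from rfl]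
  simp

lemma eq_fst_snd : S.DefPred (fun p : N × N => p.1 = p.2) := by
  have h : S.DefPred (fun p : N × N => p.1 < p.2) := S.def_lt
  have h' : S.DefPred (fun p : N × N => p.2 < p.1) := h.reindex (.prodMk (.snd .id) (.fst .id))
  convert h.not.and h'.not using 2 with p
  simp [le_antisymm_iff, and_comm]

lemma eq_of_isCoord {f g : Γ → Δ} (hf : IsCoord N f) (hg : IsCoord N g) :
    S.DefPred (fun x => f x = g x) := by
  have : S.DefPred (fun x => ∀ i, (DefSort.coords (f x) i : N) = DefSort.coords (g x) i) :=
    forall_fin fun i =>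
      eq_fst_snd.reindex (.prodMk ((IsCoord.coord i).comp hf) ((IsCoord.coord i).comp hg))
  convert this using 2 with x
  rw [← funext_iff, DefSort.coords.apply_eq_iff_eq]

lemma eq_const (a : Γ) : S.DefPred (fun x : Γ => x = a) := by
  have h1 (b : N) : S.DefPred (fun y : N => y = b) := S.def_pt b
  have : S.DefPred (fun x : Γ => ∀ i, (DefSort.coords x i : N) = DefSort.coords a i) :=
    forall_fin fun i =>
      (h1 _).reindex (IsCoord.coord i)
  convert this using 2 with x
  rw [← funext_iff, DefSort.coords.apply_eq_iff_eq]

end Struc.DefPred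

lemma definable_iff_defPred {P : Γ → Prop} : S.Definable P ↔ S.DefPred P := by
  constructor
  · intro h
    convert Struc.DefPred.exists' (Δ := Fin 0 → N) h using 2 with x
    exact ⟨fun h => ⟨Fin.elim0, h⟩, fun ⟨_, h⟩ => h⟩
  · intro h
    exact h.reindex (.fst .id)

lemma definable_iff_graph {f : Γ → Δ} :
    S.Definable f ↔ S.DefPred (fun p : Γ × Δ => p.2 = f p.1) := by
  constructor
  · intro h
    convert h.reindex (F := fun p : Γ × Δ => (p.1, fun i => DefSort.coords p.2 i))
      (.prodMk (.fst .id) (.pi fun i => (IsCoord.coord i).comp (.snd .id))) using 2 with p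
    exact DefSort.coords.apply_eq_iff_eq.symm
  · intro h
    refine (Struc.DefPred.exists' (P := fun q : (Γ × (Fin (DefSort.dim N Δ) → N)) × Δ =>
      q.2 = f q.1.1 ∧ q.1.2 = DefSort.coords q.2) ?_).congr ?_
    · refine (h.reindex (F := fun q : (Γ × (Fin (DefSort.dim N Δ) → N)) × Δ => (q.1.1, q.2))
        (.prodMk (.fst (.fst .id)) (.snd .id))).and
          (Struc.DefPred.eq_of_isCoord (.snd (.fst .id)) ?_)
      exact .pi fun i => (IsCoord.coord i).comp (.snd .id)
    · simp [DefTarget.rel]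

lemma IsCoord.definable {f : Γ → Δ} (hf : IsCoord N f) : S.Definable f :=
  definable_iff_graph.2 (Struc.DefPred.eq_of_isCoord (.snd .id) (hf.comp (.fst .id)))

namespace Struc.Definable

lemma congr {P Q : Γ → Prop} (hP : S.Definable P) (h : ∀ x, Q x ↔ P x) : S.Definable Q := by
  rwa [show Q = P from funext fun x => propext (h x)]

@[fun_prop]
lemma id' : S.Definable (fun x : Γ => x) := IsCoord.id.definable

@[fun_prop]
lemma const (y : Δ) : S.Definable (fun _ : Γ => y) :=
  definable_iff_graph.2 ((Struc.DefPred.eq_const y).reindex (.snd .id))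

@[fun_prop]
lemma const_prop (y : Prop) : S.Definable (fun _ : Γ => y) := by
  rw [definable_iff_defPred]
  by_cases h : y
  · exact Struc.DefPred.true'.congr (by simp [h])
  · exact Struc.DefPred.true'.not.congr (by simp [h])

@[fun_prop]
lemma comp {T : Type*} [DefTarget N T] {g : Δ → T} {f : Γ → Δ} (hg : S.Definable g)
    (hf : S.Definable f) : S.Definable (fun x => g (f x)) := by
  refine (Struc.DefPred.exists' (P := fun q : (Γ × (Fin (DefTarget.dim N T) → N)) × Δ =>
    q.2 = f q.1.1 ∧ DefTarget.rel q.1.2 (g q.2)) ?_).congr ?_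
  · refine Struc.DefPred.and ?_ ?_
    · exact (definable_iff_graph.1 hf).reindex
        (F := fun q : (Γ × (Fin (DefTarget.dim N T) → N)) × Δ => (q.1.1, q.2))
        (.prodMk (.fst (.fst .id)) (.snd .id))
    · exact Struc.DefPred.reindex (F := fun q : (Γ × (Fin (DefTarget.dim N T) → N)) × Δ =>
        (q.2, q.1.2)) hg (.prodMk (.snd .id) (.snd (.fst .id)))
  · simp

@[fun_prop]
lemma fst {f : Γ → Δ × E} (hf : S.Definable f) : S.Definable (fun x => (f x).1) :=
  (IsCoord.fst .id).definable.comp hf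

@[fun_prop]
lemma snd {f : Γ → Δ × E} (hf : S.Definable f) : S.Definable (fun x => (f x).2) :=
  (IsCoord.snd .id).definable.comp hf

@[fun_prop]
lemma apply' {n : ℕ} (i : Fin n) : S.Definable (fun x : Fin n → N => x i) :=
  (IsCoord.apply i .id).definable

lemma apply {n : ℕ} {f : Γ → Fin n → N} (i : Fin n) (hf : S.Definable f) :
    S.Definable (fun x => f x i) :=
  (IsCoord.apply i .id).definable.comp hf

@[fun_prop]
lemma and {P Q : Γ → Prop} (hP : S.Definable P) (hQ : S.Definable Q) :
    S.Definable (fun x => P x ∧ Q x) :=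
  definable_iff_defPred.2 ((definable_iff_defPred.1 hP).and (definable_iff_defPred.1 hQ))

@[fun_prop]
lemma not {P : Γ → Prop} (hP : S.Definable P) : S.Definable (fun x => ¬ P x) :=
  definable_iff_defPred.2 (definable_iff_defPred.1 hP).not

@[fun_prop]
lemma or {P Q : Γ → Prop} (hP : S.Definable P) (hQ : S.Definable Q) :
    S.Definable (fun x => P x ∨ Q x) :=
  (hP.not.and hQ.not).not.congr fun x => by tauto

@[fun_prop]
lemma imp {P Q : Γ → Prop} (hP : S.Definable P) (hQ : S.Definable Q) :
    S.Definable (fun x => P x → Q x) :=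
  (hP.and hQ.not).not.congr fun x => by tauto

@[fun_prop]
lemma exists' {P : Γ → Δ → Prop} (hP : S.Definable (fun p : Γ × Δ => P p.1 p.2)) :
    S.Definable (fun x => ∃ y, P x y) :=
  definable_iff_defPred.2 (definable_iff_defPred.1 hP).exists'

@[fun_prop]
lemma forall' {P : Γ → Δ → Prop} (hP : S.Definable (fun p : Γ × Δ => P p.1 p.2)) :
    S.Definable (fun x => ∀ y, P x y) :=
  (exists' (P := fun x y => ¬ P x y) hP.not).not.congr fun x => by simp

@[fun_prop]
lemma forall_fin {k : ℕ} {P : Γ → Fin k → Prop} (hP : ∀ i, S.Definable (fun x => P x i)) :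
    S.Definable (fun x => ∀ i, P x i) :=
  definable_iff_defPred.2 (Struc.DefPred.forall_fin fun i => definable_iff_defPred.1 (hP i))

lemma of_graph {f : Γ → Δ} (hf : S.Definable (fun p : Γ × Δ => p.2 = f p.1)) : S.Definable f :=
  definable_iff_graph.2 (definable_iff_defPred.1 hf)

lemma graph {f : Γ → Δ} (hf : S.Definable f) : S.Definable (fun p : Γ × Δ => p.2 = f p.1) :=
  definable_iff_defPred.2 (definable_iff_graph.1 hf)

@[fun_prop]
lemma prodMk {f : Γ → Δ} {g : Γ → E} (hf : S.Definable f) (hg : S.Definable g) :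
    S.Definable (fun x => (f x, g x)) := by
  apply of_graph
  have h1 : S.Definable (fun p : Γ × (Δ × E) => p.2.1 = f p.1) :=
    hf.graph.comp (IsCoord.definable (f := fun p : Γ × (Δ × E) => (p.1, p.2.1))
      (.prodMk (.fst .id) (.fst (.snd .id))))
  have h2 : S.Definable (fun p : Γ × (Δ × E) => p.2.2 = g p.1) :=
    hg.graph.comp (IsCoord.definable (f := fun p : Γ × (Δ × E) => (p.1, p.2.2))
      (.prodMk (.fst .id) (.snd (.snd .id))))
  exact (h1.and h2).congr fun p => Prod.ext_iff

@[fun_prop]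
lemma eq {f g : Γ → Δ} (hf : S.Definable f) (hg : S.Definable g) :
    S.Definable (fun x => f x = g x) :=
  (hg.graph.comp (Definable.id'.prodMk hf))

@[fun_prop]
lemma lt {f g : Γ → N} (hf : S.Definable f) (hg : S.Definable g) :
    S.Definable (fun x => f x < g x) := by
  have h : S.DefPred (fun p : N × N => p.1 < p.2) := S.def_lt
  exact (definable_iff_defPred.2 h).comp (hf.prodMk hg)

@[fun_prop]
lemma le {f g : Γ → N} (hf : S.Definable f) (hg : S.Definable g) :
    S.Definable (fun x => f x ≤ g x) :=
  (hg.lt hf).not.congr fun _ => not_lt.symm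

@[fun_prop]
lemma gt {f g : Γ → N} (hf : S.Definable f) (hg : S.Definable g) :
    S.Definable (fun x => f x > g x) :=
  hg.lt hf

@[fun_prop]
lemma ge {f g : Γ → N} (hf : S.Definable f) (hg : S.Definable g) :
    S.Definable (fun x => f x ≥ g x) :=
  hg.le hf

@[fun_prop]
lemma pi {n : ℕ} {f : Γ → Fin n → N} (hf : ∀ i, S.Definable (fun x => f x i)) :
    S.Definable (fun x i => f x i) := by
  apply of_graph
  refine (forall_fin (P := fun p : Γ × (Fin n → N) => fun i => p.2 i = f p.1 i) ?_).congr
    fun _ => funext_iff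
  intro i
  fun_prop

@[fun_prop]
lemma cons {n : ℕ} {f : Γ → N} {g : Γ → Fin n → N} (hf : S.Definable f) (hg : S.Definable g) :
    S.Definable (fun x => (Fin.cons (f x) (g x) : Fin (n + 1) → N)) :=
  pi fun i => by
    induction i using Fin.cases <;> simp only [Fin.cons_zero, Fin.cons_succ] <;> fun_prop

@[fun_prop]
lemma tail {n : ℕ} {g : Γ → Fin (n + 1) → N} (hg : S.Definable g) :
    S.Definable (fun x => Fin.tail (g x)) :=
  pi fun _ => hg.apply _

@[fun_prop]
lemma append {m n : ℕ} {f : Γ → Fin m → N} {g : Γ → Fin n → N} (hf : S.Definable f)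
    (hg : S.Definable g) : S.Definable (fun x => (Fin.append (f x) (g x) : Fin (m + n) → N)) :=
  pi fun i => by
    induction i using Fin.addCases <;> simp only [Fin.append_left, Fin.append_right] <;> fun_prop

@[fun_prop]
lemma update {n : ℕ} {f : Γ → N} {g : Γ → Fin n → N} (i : Fin n) (hf : S.Definable f)
    (hg : S.Definable g) : S.Definable (fun x => Function.update (g x) i (f x)) :=
  pi fun j => by
    by_cases h : j = i
    · subst h; simpa using hf
    · simpa [h] using hg.apply j

open Classical in
@[fun_prop]
lemma ite {P : Γ → Prop} {f g : Γ → Δ} (hP : S.Definable P) (hf : S.Definable f)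
    (hg : S.Definable g) : S.Definable (fun x => if P x then f x else g x) := by
  apply of_graph
  have : S.Definable (fun p : Γ × Δ => (P p.1 ∧ p.2 = f p.1) ∨ (¬ P p.1 ∧ p.2 = g p.1)) := by
    fun_prop
  refine this.congr fun p => ?_
  split_ifs <;> simp_all

lemma exists_of_unique [Nonempty Δ] {Q : Γ → Δ → Prop}
    (hQ : S.Definable (fun p : Γ × Δ => Q p.1 p.2)) (huniq : ∀ x y y', Q x y → Q x y' → y = y') :
    ∃ c : Γ → Δ, S.Definable c ∧ ∀ x, (∃ y, Q x y) → Q x (c x) := by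
  classical
  inhabit Δ
  refine ⟨fun x => if h : ∃ y, Q x y then h.choose else default, of_graph ?_, fun x h => ?_⟩
  · have : S.Definable (fun p : Γ × Δ =>
        Q p.1 p.2 ∨ ((¬ ∃ y, Q p.1 y) ∧ p.2 = default)) := by fun_prop
    refine this.congr fun p => ?_
    by_cases h : ∃ y, Q p.1 y
    · simp only [h, dite_true, not_true_eq_false, false_and, or_false]
      exact ⟨fun e => e ▸ h.choose_spec, fun e => huniq _ _ _ e h.choose_spec⟩
    · have hp : ¬ Q p.1 p.2 := fun e => h ⟨_, e⟩
      simp [h, hp]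
  · simpa [h] using h.choose_spec

end Struc.Definable

lemma definable_mem_iff {m : ℕ} {A : Set (Fin m → N)} : S.Definable (fun x => x ∈ A) ↔ S.Def m A :=
  definable_iff_defPred

end Definability

end DefinableCalculus

section OneVariable

variable {N : Type u} [LinearOrder N] {S : Struc N} {Γ Δ : Type u} [DefSort N Γ] [DefSort N Δ]

lemma IsFinUnionPtsIntervals.eventually_mem_or {A : Set N} (hA : IsFinUnionPtsIntervals A)
    {l : Filter N} (hl : ∀ a, (∀ᶠ s in l, s < a) ∨ ∀ᶠ s in l, a < s) :
    (∀ᶠ s in l, s ∈ A) ∨ ∀ᶠ s in l, s ∉ A := by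
  obtain ⟨k, f, hf, rfl⟩ := hA
  have piece (i) : (∀ᶠ s in l, s ∈ f i) ∨ ∀ᶠ s in l, s ∉ f i := by
    rcases hf i with ⟨a, e⟩ | ⟨a, b, e⟩ | ⟨a, e⟩ | ⟨b, e⟩ | e <;> rw [e]
    · exact .inr ((hl a).elim (·.mono fun s hs => hs.ne) (·.mono fun s hs => hs.ne'))
    · rcases hl a with ha | ha
      · exact .inr (ha.mono fun s hs h => hs.not_gt h.1)
      · exact (hl b).imp (fun hb => ha.and hb) (·.mono fun s hs h => hs.not_gt h.2)
    · exact (hl a).symm.imp id (·.mono fun s hs => hs.not_gt)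
    · exact (hl b).imp id (·.mono fun s hs => hs.not_gt)
    · exact .inl (.of_forall mem_univ)
  by_cases h : ∃ i, ∀ᶠ s in l, s ∈ f i
  · obtain ⟨i, hi⟩ := h
    exact .inl (hi.mono fun s hs => mem_iUnion_of_mem i hs)
  · have hnot : ∀ i, ∀ᶠ s in l, s ∉ f i := fun i => (piece i).resolve_left fun hi => h ⟨i, hi⟩
    exact .inr ((eventually_all.2 hnot).mono fun s hs => by simpa using hs)

lemma IsFinUnionPtsIntervals.exists_isLUB [DenselyOrdered N] [NoMaxOrder N]
    {A : Set N} (hA : IsFinUnionPtsIntervals A) (hne : A.Nonempty) (hbdd : BddAbove A) :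
    ∃ c, IsLUB A c := by
  obtain ⟨k, f, hf, rfl⟩ := hA
  have piece (i : {i // (f i).Nonempty}) : ∃ c, IsLUB (f i) c := by
    have hi := i.2
    have hb := hbdd.mono (subset_iUnion f i)
    rcases hf i with ⟨a, e⟩ | ⟨a, b, e⟩ | ⟨a, e⟩ | ⟨b, e⟩ | e <;> rw [e] at hi hb ⊢
    · exact ⟨a, isLUB_singleton⟩
    · exact ⟨b, isLUB_Ioo (nonempty_Ioo.1 hi)⟩
    · exact absurd hb (not_bddAbove_Ioi a)
    · exact ⟨b, isLUB_Iio⟩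
    · have : Nonempty N := hi.to_type
      exact absurd hb not_bddAbove_univ
  choose c hc using piece
  have hunion : ⋃ i, f i = ⋃ i : {i // (f i).Nonempty}, f i := by
    ext t
    simp only [mem_iUnion, Subtype.exists, exists_prop]
    exact exists_congr fun i => ⟨fun h => ⟨⟨t, h⟩, h⟩, And.right⟩
  obtain ⟨t, ht⟩ := hne
  obtain ⟨i, hi⟩ := mem_iUnion.1 ht
  have : Nonempty {i // (f i).Nonempty} := ⟨⟨i, t, hi⟩⟩
  obtain ⟨j, hj⟩ := Finite.exists_max c
  rw [hunion]
  exact ⟨c j, (isLUB_iUnion_iff_of_isLUB hc _).1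
    (IsGreatest.isLUB ⟨mem_range_self j, forall_mem_range.2 hj⟩)⟩

lemma frequently_cofinite_of_Ioo [DenselyOrdered N] {P : N → Prop} {a b : N} (hab : a < b)
    (h : ∀ t ∈ Ioo a b, P t) : ∃ᶠ t in cofinite, P t :=
  frequently_cofinite_iff_infinite.2 ((Ioo_infinite hab).mono h)

namespace Struc.Definable

lemma curry_right {T : Type*} [DefTarget N T] {P : Γ → Δ → T}
    (hP : S.Definable (fun p : Γ × Δ => P p.1 p.2)) (x : Γ) : S.Definable (fun t => P x t) :=
  hP.comp ((const x).prodMk id')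

lemma isFinUnionPtsIntervals {P : N → Prop} (hP : S.Definable P) :
    IsFinUnionPtsIntervals {t | P t} :=
  S.o_min (definable_iff_defPred.1 hP)

@[fun_prop]
lemma mem_Ioo {f a b : Γ → N} (hf : S.Definable f) (ha : S.Definable a) (hb : S.Definable b) :
    S.Definable (fun x => f x ∈ Ioo (a x) (b x)) :=
  (ha.lt hf).and (hf.lt hb)

@[fun_prop]
lemma isLUB {P : Γ → N → Prop} {c : Γ → N} (hP : S.Definable (fun p : Γ × N => P p.1 p.2))
    (hc : S.Definable c) : S.Definable (fun x => IsLUB {t | P x t} (c x)) := by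
  unfold IsLUB IsLeast upperBounds lowerBounds
  simp only [mem_ofPred_eq]
  fun_prop

@[fun_prop]
lemma eventually_nhdsGT [TopologicalSpace N] [OrderTopology N] [NoMaxOrder N] {P : Γ → N → Prop}
    {c : Γ → N} (hP : S.Definable (fun p : Γ × N => P p.1 p.2))
    (hc : S.Definable c) : S.Definable (fun x => ∀ᶠ t in 𝓝[>] (c x), P x t) := by
  have : S.Definable (fun x => ∃ d, c x < d ∧ ∀ t, t ∈ Ioo (c x) d → P x t) := by fun_prop
  exact this.congr fun x => mem_nhdsGT_iff_exists_Ioo_subset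

lemma eventually_or_eventually_not {P : N → Prop} (hP : S.Definable P) {l : Filter N}
    (hl : ∀ a, (∀ᶠ s in l, s < a) ∨ ∀ᶠ s in l, a < s) :
    (∀ᶠ s in l, P s) ∨ ∀ᶠ s in l, ¬ P s :=
  hP.isFinUnionPtsIntervals.eventually_mem_or hl

lemma eventually_nhdsGT_or_not [TopologicalSpace N] [OrderTopology N] {P : N → Prop}
    (hP : S.Definable P) (c : N) : (∀ᶠ s in 𝓝[>] c, P s) ∨ ∀ᶠ s in 𝓝[>] c, ¬ P s :=
  hP.eventually_or_eventually_not fun a => (lt_or_ge c a).imp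
    (fun h => eventually_nhdsWithin_of_eventually_nhds (eventually_lt_nhds h))
    (fun h => eventually_nhdsWithin_of_forall fun _ hs => h.trans_lt hs)

lemma eventually_atBot_or_not [NoMinOrder N] {P : N → Prop} (hP : S.Definable P) :
    (∀ᶠ s in atBot, P s) ∨ ∀ᶠ s in atBot, ¬ P s :=
  hP.eventually_or_eventually_not fun a => .inl (eventually_lt_atBot a)

lemma exists_isLeast [Nonempty N] {P : Γ → N → Prop}
    (hP : S.Definable (fun p : Γ × N => P p.1 p.2)) :
    ∃ c : Γ → N, S.Definable c ∧
      ∀ x, (∃ t, IsLeast {t | P x t} t) → IsLeast {t | P x t} (c x) := by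
  refine exists_of_unique ?_ fun _ _ _ => IsLeast.unique
  unfold IsLeast lowerBounds
  simp only [mem_ofPred_eq]
  fun_prop

variable [DenselyOrdered N] [NoMaxOrder N] [Nonempty N]

lemma exists_isLUB {P : Γ → N → Prop} (hP : S.Definable (fun p : Γ × N => P p.1 p.2)) :
    ∃ c : Γ → N, S.Definable c ∧
      ∀ x, (∃ t, P x t) → BddAbove {t | P x t} → IsLUB {t | P x t} (c x) := by
  obtain ⟨c, hc, hlub⟩ := exists_of_unique (S := S)
    (Q := fun x c => IsLUB {t | P x t} c) (by fun_prop) fun _ _ _ => IsLUB.unique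
  exact ⟨c, hc, fun x hne hb => hlub x
    ((hP.curry_right x).isFinUnionPtsIntervals.exists_isLUB hne hb)⟩

lemma exists_isGLB {P : Γ → N → Prop} (hP : S.Definable (fun p : Γ × N => P p.1 p.2)) :
    ∃ c : Γ → N, S.Definable c ∧
      ∀ x, (∃ t, P x t) → BddBelow {t | P x t} → IsGLB {t | P x t} (c x) := by
  obtain ⟨c, hc, hlub⟩ := exists_isLUB (S := S) (P := fun x c => ∀ t, P x t → c ≤ t) (by fun_prop)
  exact ⟨c, hc, fun x ⟨t, ht⟩ hb => isLUB_lowerBounds.1 (hlub x hb ⟨t, fun d hd => hd t ht⟩)⟩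

variable [NoMinOrder N]

lemma frequently_cofinite_iff {P : N → Prop} (hP : S.Definable P) :
    (∃ᶠ t in cofinite, P t) ↔ ∃ a b, a < b ∧ ∀ t ∈ Ioo a b, P t := by
  refine ⟨fun hfreq => ?_, fun ⟨a, b, hab, h⟩ => frequently_cofinite_of_Ioo hab h⟩
  have hinf := frequently_cofinite_iff_infinite.1 hfreq
  obtain ⟨k, f, hf, hP⟩ := hP.isFinUnionPtsIntervals
  obtain ⟨i, hi⟩ : ∃ i, (f i).Infinite := by
    by_contra! hfin
    exact hinf (hP ▸ finite_iUnion hfin)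
  suffices ∃ a b, a < b ∧ Ioo a b ⊆ f i by
    obtain ⟨a, b, hab, h⟩ := this
    exact ⟨a, b, hab, h.trans ((subset_iUnion f i).trans hP.ge)⟩
  rcases hf i with ⟨a, e⟩ | ⟨a, b, e⟩ | ⟨a, e⟩ | ⟨b, e⟩ | e <;> rw [e] at hi ⊢
  · exact absurd (finite_singleton a) hi
  · exact ⟨a, b, nonempty_Ioo.1 hi.nonempty, Subset.rfl⟩
  · obtain ⟨b, hb⟩ := exists_gt a
    exact ⟨a, b, hb, Ioo_subset_Ioi_self⟩
  · obtain ⟨a, ha⟩ := exists_lt b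
    exact ⟨a, b, ha, Ioo_subset_Iio_self⟩
  · obtain ⟨a, b, hab⟩ := exists_pair_lt N
    exact ⟨a, b, hab, subset_univ _⟩

@[fun_prop]
lemma frequently_cofinite {P : Γ → N → Prop} (hP : S.Definable (fun p : Γ × N => P p.1 p.2)) :
    S.Definable (fun x => ∃ᶠ t in cofinite, P x t) := by
  have : S.Definable (fun x => ∃ a b, a < b ∧ ∀ t, t ∈ Ioo a b → P x t) := by fun_prop
  exact this.congr fun x => (hP.curry_right x).frequently_cofinite_iff

@[fun_prop]
lemma eventually_cofinite {P : Γ → N → Prop} (hP : S.Definable (fun p : Γ × N => P p.1 p.2)) :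
    S.Definable (fun x => ∀ᶠ t in cofinite, P x t) := by
  have : S.Definable (fun x => ¬ ∃ᶠ t in cofinite, ¬ P x t) := by fun_prop
  simpa only [not_frequently, not_not] using this

end Struc.Definable

end OneVariable

lemma exists_isLeast_of_finite {α : Type*} [LinearOrder α] {A : Set α} (hA : A.Finite)
    (hne : A.Nonempty) : ∃ t, IsLeast A t :=
  Set.exists_min_image A id hA hne

section Commutation

variable {N : Type u} [LinearOrder N] [NoMaxOrder N] [TopologicalSpace N] [OrderTopology N]
  {S : Struc N}

/-- The first alternative makes `r` strict near `a`; otherwise no `t` near `a` is a record, and the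
leftmost element that `t` is related to would be one unless there are infinitely many. -/
lemma eventually_forall_not_rel_or {r : N → N → Prop}
    (hr : S.Definable (fun p : N × N => r p.1 p.2)) (htrans : ∀ x y z, r x y → r y z → r x z)
    (a : N) :
    (∀ᶠ t in 𝓝[>] a, ∀ s ∈ Ioo a t, ¬ r t s) ∨
      ∀ᶠ t in 𝓝[>] a, ∃ᶠ s in cofinite, s ∈ Ioo a t ∧ r t s := by
  have hdef : S.Definable (fun t => ∀ s, s ∈ Ioo a t → ¬ r t s) := by fun_prop
  refine (hdef.eventually_nhdsGT_or_not a).imp id fun h => ?_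
  obtain ⟨d, had, hd⟩ := mem_nhdsGT_iff_exists_Ioo_subset.1 h
  replace hd : ∀ t ∈ Ioo a d, ∃ s ∈ Ioo a t, r t s := fun t ht => by
    simpa [and_assoc] using hd ht
  filter_upwards [Ioo_mem_nhdsGT had] with t ht
  rw [frequently_cofinite_iff_infinite]
  intro hfin
  obtain ⟨s, ⟨hs, hts⟩, hleast⟩ := exists_isLeast_of_finite hfin (hd t ht)
  obtain ⟨s', hs', hss'⟩ := hd s ⟨hs.1, hs.2.trans ht.2⟩
  exact hs'.2.not_ge (hleast ⟨⟨hs'.1, hs'.2.trans hs.2⟩, htrans _ _ _ hts hss'⟩)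

variable [DenselyOrdered N] [NoMinOrder N]

lemma exists_Ioo_forall_of_eventually_nhdsGT {R : N → N → Prop}
    (hR : S.Definable (fun p : N × N => R p.1 p.2)) {a b : N} (hab : a < b)
    (h : ∀ t ∈ Ioo a b, ∀ᶠ s in 𝓝[>] t, R t s) :
    ∃ p q, p < q ∧ Ioo p q ⊆ Ioo a b ∧ ∀ t ∈ Ioo p q, ∀ s ∈ Ioo p q, t < s → R t s := by
  have : Nonempty N := ⟨a⟩
  let E : N → N → Prop := fun t d => ∀ s, s ∈ Ioo t d → R t s
  have hE (t) (ht : t ∈ Ioo a b) : ∃ d, t < d ∧ E t d :=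
    mem_nhdsGT_iff_exists_Ioo_subset.1 (h t ht)
  obtain hrec | hrec := eventually_forall_not_rel_or (S := S)
    (r := fun t s => ∀ d, E t d → E s d) (by fun_prop) (fun _ _ _ h₁ h₂ d hd => h₂ d (h₁ d hd)) a
  · obtain ⟨q, hq, hrec⟩ := mem_nhdsGT_iff_exists_Ioo_subset.1 (hrec.and (Ioo_mem_nhdsGT hab))
    obtain ⟨t, hat, htq⟩ := exists_between hq
    obtain ⟨d, htd, hd⟩ := hE t (hrec ⟨hat, htq⟩).2
    have hsub : Ioo t (min d q) ⊆ Ioo a q :=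
      Ioo_subset_Ioo hat.le (min_le_right _ _)
    refine ⟨t, min d q, lt_min htd htq, fun s hs => (hrec (hsub hs)).2,
      fun s hs s' hs' hss' => ?_⟩
    obtain ⟨e, hse, hte⟩ : ∃ e, E s e ∧ ¬ E t e := by
      simpa using (hrec (hsub hs)).1 t ⟨hat, hs.1⟩
    have hde : d < e := by
      by_contra! hed
      exact hte fun u hu => hd u ⟨hu.1, hu.2.trans_le hed⟩
    exact hse s' ⟨hss', (hs'.2.trans_le (min_le_left _ _)).trans hde⟩
  · obtain ⟨t, hrec, ht⟩ := (hrec.and (Ioo_mem_nhdsGT hab)).exists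
    obtain ⟨d, htd, hd⟩ := hE t ht
    obtain ⟨p, q, hpq, hI⟩ :=
      (Struc.Definable.frequently_cofinite_iff (S := S) (by fun_prop)).1 hrec
    exact ⟨p, q, hpq, fun s hs => ⟨(hI s hs).1.1, (hI s hs).1.2.trans ht.2⟩,
      fun s hs s' hs' hss' => (hI s hs).2 d hd s' ⟨hss', (hI s' hs').1.2.trans htd⟩⟩

/-- If the right germs of `fun t => R t s` were false for infinitely many `s`, the version for right
neighbourhoods would refute `R t s` for all `s < t` in some interval. -/
lemma exists_Ioo_forall_of_eventually_nhdsLT {R : N → N → Prop}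
    (hR : S.Definable (fun p : N × N => R p.1 p.2)) {a b : N} (hab : a < b)
    (h : ∀ t ∈ Ioo a b, ∀ᶠ s in 𝓝[<] t, R t s) :
    ∃ p q, p < q ∧ Ioo p q ⊆ Ioo a b ∧ ∀ t ∈ Ioo p q, ∀ s ∈ Ioo p q, s < t → R t s := by
  have : Nonempty N := ⟨a⟩
  have hright : ∃ᶠ s in cofinite, (s ∈ Ioo a b ∧ ∀ᶠ t in 𝓝[>] s, R t s) ∨
      (s ∈ Ioo a b ∧ ∀ᶠ t in 𝓝[>] s, ¬ R t s) :=
    frequently_cofinite_of_Ioo hab fun s hs => by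
      have hRs : S.Definable (fun t => R t s) := by fun_prop
      simpa only [hs, true_and] using hRs.eventually_nhdsGT_or_not s
  obtain hpos | hneg := frequently_or_distrib.1 hright
  · obtain ⟨c, d, hcd, hI⟩ :=
      (Struc.Definable.frequently_cofinite_iff (S := S) (by fun_prop)).1 hpos
    obtain ⟨p, q, hpq, hsub, hpair⟩ := exists_Ioo_forall_of_eventually_nhdsGT (S := S)
      (R := fun s t => R t s) (by fun_prop) hcd fun s hs => (hI s hs).2
    exact ⟨p, q, hpq, fun s hs => (hI s (hsub hs)).1, fun t ht s hs hst => hpair s hs t ht hst⟩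
  · obtain ⟨c, d, hcd, hI⟩ :=
      (Struc.Definable.frequently_cofinite_iff (S := S) (by fun_prop)).1 hneg
    obtain ⟨p, q, hpq, hsub, hpair⟩ := exists_Ioo_forall_of_eventually_nhdsGT (S := S)
      (R := fun s t => ¬ R t s) (by fun_prop) hcd fun s hs => (hI s hs).2
    obtain ⟨t, ht⟩ := exists_between hpq
    obtain ⟨s, hs, hps⟩ := ((h t (hI t (hsub ht)).1).and (Ioo_mem_nhdsLT ht.1)).exists
    exact absurd hs (hpair s ⟨hps.1, hps.2.trans ht.2⟩ t ht hps.2)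

lemma exists_frequently_of_frequently_forall_le {R : N → N → Prop} {U : N → Prop}
    (hR : S.Definable (fun p : N × N => R p.1 p.2)) (hU : S.Definable U)
    (h : ∃ᶠ t in cofinite, ∃ d, U d ∧ ∀ s ≤ d, U s → R t s) :
    ∃ c, ∃ᶠ t in cofinite, R t c := by
  have : Nonempty N := h.exists.nonempty
  let E : N → N → Prop := fun t d => U d ∧ ∀ s, s ≤ d → U s → R t s
  obtain ⟨a, b, hab, hI⟩ := (Struc.Definable.frequently_cofinite_iff (S := S)
    (P := fun t => ∃ d, E t d) (by fun_prop)).1 h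
  suffices ∃ t ∈ Ioo a b, ∃ᶠ s in cofinite, ∀ d, E t d → E s d by
    obtain ⟨t, ht, hfreq⟩ := this
    obtain ⟨d, hd⟩ := hI t ht
    exact ⟨d, hfreq.mono fun s hs => (hs d hd).2 d le_rfl hd.1⟩
  obtain hrec | hrec := eventually_forall_not_rel_or (S := S)
    (r := fun t s => ∀ d, E t d → E s d) (by fun_prop) (fun _ _ _ h₁ h₂ d hd => h₂ d (h₁ d hd)) a
  · obtain ⟨q, hq, hrec⟩ := mem_nhdsGT_iff_exists_Ioo_subset.1 (hrec.and (Ioo_mem_nhdsGT hab))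
    obtain ⟨t, hat, htq⟩ := exists_between hq
    refine ⟨t, (hrec ⟨hat, htq⟩).2, frequently_cofinite_of_Ioo htq fun s hs d hd => ?_⟩
    obtain ⟨e, hse, hte⟩ : ∃ e, E s e ∧ ¬ E t e := by
      simpa using (hrec ⟨hat.trans hs.1, hs.2⟩).1 t ⟨hat, hs.1⟩
    have hde : d ≤ e := by
      by_contra! hed
      exact hte ⟨hse.1, fun u hu => hd.2 u (hu.trans hed.le)⟩
    exact ⟨hd.1, fun u hu => hse.2 u (hu.trans hde)⟩
  · obtain ⟨t, hrec, ht⟩ := (hrec.and (Ioo_mem_nhdsGT hab)).exists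
    exact ⟨t, ht, hrec.mono fun s hs => hs.2⟩

lemma Struc.Definable.exists_isLeast_eventually_nhdsGT {P : N → Prop} (hP : S.Definable P)
    (hfreq : ∃ᶠ t in cofinite, P t) (hbot : ¬ ∀ᶠ s in atBot, P s) :
    ∃ l, IsLeast {l | ∀ᶠ s in 𝓝[>] l, P s} l := by
  have : Nonempty N := hfreq.exists.nonempty
  obtain ⟨a, b, hab, hI⟩ := hP.frequently_cofinite_iff.1 hfreq
  obtain ⟨d, hd⟩ := eventually_atBot.1 (hP.eventually_atBot_or_not.resolve_left hbot)
  have hlower (l) (hl : ∀ᶠ s in 𝓝[>] l, P s) : d ≤ l := by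
    by_contra! hld
    obtain ⟨s, hs, hsd⟩ := (hl.and (Ioo_mem_nhdsGT hld)).exists
    exact hd s hsd.2.le hs
  obtain ⟨g, -, hg⟩ := Struc.Definable.exists_isGLB (S := S) (Γ := N)
    (P := fun _ l => ∀ᶠ s in 𝓝[>] l, P s) (by fun_prop)
  replace hg := hg a ⟨a, mem_of_superset (Ioo_mem_nhdsGT hab) hI⟩ ⟨d, hlower⟩
  refine ⟨g a, (hP.eventually_nhdsGT_or_not _).resolve_right fun hnot => ?_, hg.1⟩
  obtain ⟨e, hge, he⟩ := mem_nhdsGT_iff_exists_Ioo_subset.1 hnot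
  obtain ⟨l, hl, hgl, hle⟩ := hg.exists_between hge
  change ∀ᶠ s in 𝓝[>] l, P s at hl
  obtain ⟨s, hs, hls⟩ := (hl.and (Ioo_mem_nhdsGT hle)).exists
  exact he ⟨hgl.trans_lt hls.1, hls.2⟩ hs

lemma exists_frequently_of_finite_fibers {R : N → N → Prop} {T : N → Prop} {l : N → N}
    (hR : S.Definable (fun p : N × N => R p.1 p.2)) (hT : S.Definable T) (hl : S.Definable l)
    (hfreq : ∃ᶠ t in cofinite, T t) (hfib : ∀ c, {t | T t ∧ l t = c}.Finite)
    (h : ∀ t, T t → ∀ᶠ s in 𝓝[>] (l t), R t s) : ∃ c, ∃ᶠ t in cofinite, R t c := by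
  have : Nonempty N := hfreq.exists.nonempty
  have himage : ∃ᶠ c in cofinite, ∃ t, T t ∧ l t = c :=
    frequently_cofinite_iff_infinite.2 fun hfin =>
      frequently_cofinite_iff_infinite.1 hfreq (hfin.of_finite_fibers l fun c _ => hfib c)
  obtain ⟨a, b, hab, hI⟩ :=
    (Struc.Definable.frequently_cofinite_iff (S := S) (by fun_prop)).1 himage
  obtain ⟨θ, hθ, hleast⟩ := Struc.Definable.exists_isLeast (S := S) (Γ := N)
    (P := fun c t => T t ∧ l t = c) (by fun_prop)
  replace hleast (c) (hc : c ∈ Ioo a b) : T (θ c) ∧ l (θ c) = c :=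
    (hleast c (exists_isLeast_of_finite (hfib c) (hI c hc))).1
  obtain ⟨p, q, hpq, hsub, hpair⟩ := exists_Ioo_forall_of_eventually_nhdsGT (S := S)
    (R := fun c s => R (θ c) s) (by fun_prop) hab fun c hc => by
      simpa only [(hleast c hc).2] using h _ (hleast c hc).1
  obtain ⟨s, hs⟩ := exists_between hpq
  have hinj : InjOn θ (Ioo p s) := fun c hc c' hc' e => by
    rw [← (hleast c (hsub ⟨hc.1, hc.2.trans hs.2⟩)).2, e,
      (hleast c' (hsub ⟨hc'.1, hc'.2.trans hs.2⟩)).2]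
  refine ⟨s, frequently_cofinite_iff_infinite.2 (((Ioo_infinite hs.1).image hinj).mono ?_)⟩
  rintro _ ⟨c, hc, rfl⟩
  exact hpair c ⟨hc.1, hc.2.trans hs.2⟩ s hs hc.2

lemma exists_frequently_of_frequently_frequently {R : N → N → Prop}
    (hR : S.Definable (fun p : N × N => R p.1 p.2))
    (h : ∃ᶠ t in cofinite, ∃ᶠ c in cofinite, R t c) : ∃ c, ∃ᶠ t in cofinite, R t c := by
  have : Nonempty N := h.exists.nonempty
  by_cases hbot : ∃ᶠ t in cofinite, ∀ᶠ s in atBot, R t s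
  · exact exists_frequently_of_frequently_forall_le hR (S := S) (U := fun _ => True) (by fun_prop)
      (hbot.mono fun t ht => by simpa using eventually_atBot.1 ht)
  let T : N → Prop := fun t => (∃ᶠ c in cofinite, R t c) ∧ ¬ ∃ d, ∀ s, s ≤ d → R t s
  have hT : ∃ᶠ t in cofinite, T t :=
    h.and_eventually ((not_frequently.1 hbot).mono fun t ht => by rwa [eventually_atBot] at ht)
  obtain ⟨l, hl, hleast⟩ := Struc.Definable.exists_isLeast (S := S) (Γ := N)
    (P := fun t l => ∀ᶠ s in 𝓝[>] l, R t s) (by fun_prop)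
  replace hleast (t) (ht : T t) : ∀ᶠ s in 𝓝[>] (l t), R t s :=
    (hleast t ((hR.curry_right t).exists_isLeast_eventually_nhdsGT ht.1
      (by rw [eventually_atBot]; exact ht.2))).1
  by_cases hfib : ∃ a, ∃ᶠ t in cofinite, T t ∧ l t = a
  · obtain ⟨a, ha⟩ := hfib
    refine exists_frequently_of_frequently_forall_le hR (S := S) (U := (a < ·)) (by fun_prop)
      (ha.mono fun t ⟨ht, hta⟩ => ?_)
    obtain ⟨d, had, hd⟩ := mem_nhdsGT_iff_exists_Ioc_subset.1 (hta ▸ hleast t ht)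
    exact ⟨d, had, fun s hs has => hd ⟨has, hs⟩⟩
  · simp only [frequently_cofinite_iff_infinite, not_exists, not_infinite] at hfib
    exact exists_frequently_of_finite_fibers (S := S) (by fun_prop) (by fun_prop) hl hT hfib hleast

lemma frequently_cofinite_comm {R : N → N → Prop} (hR : S.Definable (fun p : N × N => R p.1 p.2))
    (h : ∃ᶠ t in cofinite, ∃ᶠ c in cofinite, R t c) :
    ∃ᶠ c in cofinite, ∃ᶠ t in cofinite, R t c := by
  have : Nonempty N := h.exists.nonempty
  by_contra hcon
  obtain ⟨c, hc⟩ := exists_frequently_of_frequently_frequently (S := S)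
    (R := fun t c => R t c ∧ ¬ ∃ᶠ t in cofinite, R t c) (by fun_prop)
    (h.mono fun t ht => ht.and_eventually (not_frequently.1 hcon))
  exact hc.exists.choose_spec.2 (hc.mono fun t ht => ht.1)

end Commutation

section LargeSets

/-- The filter on `N ^ k` whose frequently quantifier is `∃ᶠ x₀, ∃ᶠ x₁, …` over `cofinite`. A
definable set meeting it frequently is one of full dimension, see `frequently_iterCofinite_iff`. -/
def iterCofinite (N : Type*) : ∀ k : ℕ, Filter (Fin k → N)
  | 0 => pure Fin.elim0
  | k + 1 => (cofinite.curry (iterCofinite N k)).map fun p => Fin.cons p.1 p.2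

lemma frequently_iterCofinite_zero {N : Type*} {P : (Fin 0 → N) → Prop} :
    (∃ᶠ w in iterCofinite N 0, P w) ↔ P Fin.elim0 := by
  simp [iterCofinite]

lemma frequently_iterCofinite_succ {N : Type*} {k : ℕ} {P : (Fin (k + 1) → N) → Prop} :
    (∃ᶠ w in iterCofinite N (k + 1), P w) ↔
      ∃ᶠ t in cofinite, ∃ᶠ w in iterCofinite N k, P (Fin.cons t w) := by
  rw [iterCofinite, frequently_map, frequently_curry_iff]

/-- The open box with corners `a` and `b`. -/
def box {N : Type*} [Preorder N] {k : ℕ} (a b : Fin k → N) : Set (Fin k → N) :=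
  Set.pi univ fun i => Ioo (a i) (b i)

lemma mem_box {N : Type*} [Preorder N] {k : ℕ} {a b w : Fin k → N} :
    w ∈ box a b ↔ ∀ i, w i ∈ Ioo (a i) (b i) := by
  simp [box]

lemma cons_mem_box {N : Type*} [Preorder N] {k : ℕ} {p q t : N} {a b w : Fin k → N} :
    (Fin.cons t w : Fin (k + 1) → N) ∈ box (Fin.cons p a : Fin (k + 1) → N) (Fin.cons q b) ↔
      t ∈ Ioo p q ∧ w ∈ box a b := by
  simp [mem_box, Fin.forall_fin_succ]

lemma exists_frequently_coord {N : Type*} {m : ℕ} {Y : Set (Fin m → N)} (hY : Y.Infinite) :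
    ∃ i, ∃ᶠ s in cofinite, ∃ y ∈ Y, y i = s := by
  by_contra hfin
  simp only [frequently_cofinite_iff_infinite, not_exists, not_infinite] at hfin
  exact hY ((Finite.pi' hfin).subset fun y hy i => ⟨y, hy, rfl⟩)

variable {N : Type u} [LinearOrder N] {S : Struc N} {Γ : Type u} [DefSort N Γ]

@[fun_prop]
lemma Struc.Definable.mem_box {k : ℕ} {f a b : Γ → Fin k → N} (hf : S.Definable f)
    (ha : S.Definable a) (hb : S.Definable b) : S.Definable (fun x => f x ∈ box (a x) (b x)) := by
  simp_rw [_root_.mem_box]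
  fun_prop

variable [DenselyOrdered N]

lemma frequently_iterCofinite_box {k : ℕ} {a b : Fin k → N} (hab : ∀ i, a i < b i) :
    ∃ᶠ w in iterCofinite N k, w ∈ box a b := by
  induction k with
  | zero => simp only [frequently_iterCofinite_zero, mem_box, IsEmpty.forall_iff]
  | succ k ih =>
    rw [frequently_iterCofinite_succ]
    refine frequently_cofinite_of_Ioo (hab 0) fun t ht => ?_
    refine (ih (a := Fin.tail a) (b := Fin.tail b) fun i => hab i.succ).mono fun w hw => ?_
    rw [← Fin.cons_self_tail a, ← Fin.cons_self_tail b]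
    exact cons_mem_box.2 ⟨ht, hw⟩

lemma box_nonempty {k : ℕ} {a b : Fin k → N} (hab : ∀ i, a i < b i) : (box a b).Nonempty :=
  (frequently_iterCofinite_box hab).exists

variable [NoMinOrder N] [NoMaxOrder N] [Nonempty N]

@[fun_prop]
lemma Struc.Definable.frequently_iterCofinite {k : ℕ} {P : Γ → (Fin k → N) → Prop}
    (hP : S.Definable (fun p : Γ × (Fin k → N) => P p.1 p.2)) :
    S.Definable (fun x => ∃ᶠ w in iterCofinite N k, P x w) := by
  induction k generalizing Γ with
  | zero =>
    simp_rw [frequently_iterCofinite_zero]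
    fun_prop
  | succ k ih =>
    simp_rw [frequently_iterCofinite_succ]
    exact frequently_cofinite (ih (P := fun (p : Γ × N) w => P p.1 (Fin.cons p.2 w)) (by fun_prop))

section Topology

variable [TopologicalSpace N] [OrderTopology N]

lemma frequently_cofinite_iterCofinite_comm {k : ℕ} {R : N → (Fin k → N) → Prop}
    (hR : S.Definable (fun p : N × (Fin k → N) => R p.1 p.2)) :
    (∃ᶠ t in cofinite, ∃ᶠ w in iterCofinite N k, R t w) ↔
      ∃ᶠ w in iterCofinite N k, ∃ᶠ t in cofinite, R t w := by
  induction k with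
  | zero => simp_rw [frequently_iterCofinite_zero]
  | succ k ih =>
    simp_rw [frequently_iterCofinite_succ]
    refine Iff.trans ?_ (frequently_congr (.of_forall fun s =>
      ih (R := fun t w => R t (Fin.cons s w)) (by fun_prop)))
    exact ⟨frequently_cofinite_comm (S := S) (by fun_prop),
      frequently_cofinite_comm (S := S) (by fun_prop)⟩

lemma eventually_iterCofinite_comm {k l : ℕ} {R : (Fin k → N) → (Fin l → N) → Prop}
    (hR : S.Definable (fun p : (Fin k → N) × (Fin l → N) => R p.1 p.2))
    (h : ∀ᶠ z in iterCofinite N k, ∀ᶠ w in iterCofinite N l, R z w) :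
    ∀ᶠ w in iterCofinite N l, ∀ᶠ z in iterCofinite N k, R z w := by
  contrapose! h
  induction k with
  | zero => simpa only [frequently_iterCofinite_zero] using h
  | succ k ih =>
    simp only [frequently_iterCofinite_succ] at h ⊢
    refine ((frequently_cofinite_iterCofinite_comm (S := S) (by fun_prop)).2 h).mono fun t ht => ?_
    exact ih (R := fun z w => R (Fin.cons t z) w) (by fun_prop) ht

lemma frequently_iterCofinite_iff {k : ℕ} {P : (Fin k → N) → Prop} (hP : S.Definable P) :
    (∃ᶠ w in iterCofinite N k, P w) ↔
      ∃ a b : Fin k → N, (∀ i, a i < b i) ∧ ∀ w ∈ box a b, P w := by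
  refine ⟨fun h => ?_, fun ⟨a, b, hab, hI⟩ => (frequently_iterCofinite_box hab).mono hI⟩
  induction k with
  | zero =>
    rw [frequently_iterCofinite_zero] at h
    exact ⟨Fin.elim0, Fin.elim0, fun i => i.elim0, fun w _ => Subsingleton.elim Fin.elim0 w ▸ h⟩
  | succ k ih =>
    rw [frequently_iterCofinite_succ, frequently_cofinite_iterCofinite_comm (S := S)
      (by fun_prop)] at h
    have hpq : ∃ᶠ w in iterCofinite N k, ∃ᶠ p in cofinite, ∃ᶠ q in cofinite,
        p < q ∧ ∀ t, t ∈ Ioo p q → P (Fin.cons t w) := by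
      refine h.mono fun w hw => ?_
      obtain ⟨p, q, hpq, hI⟩ :=
        (Struc.Definable.frequently_cofinite_iff (S := S) (by fun_prop)).1 hw
      exact frequently_cofinite_of_Ioo hpq fun p' hp' => frequently_cofinite_of_Ioo hp'.2
        fun q' hq' => ⟨hq'.1, fun t ht => hI t ⟨hp'.1.trans ht.1, ht.2.trans hq'.2⟩⟩
    rw [← frequently_cofinite_iterCofinite_comm (S := S) (by fun_prop)] at hpq
    obtain ⟨p, hp⟩ := hpq.exists
    rw [← frequently_cofinite_iterCofinite_comm (S := S) (by fun_prop)] at hp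
    obtain ⟨q, hq⟩ := hp.exists
    obtain ⟨a, b, hab, hbox⟩ := ih (by fun_prop) hq
    refine ⟨Fin.cons p a, Fin.cons q b, ?_, fun w hw => ?_⟩
    · simpa [Fin.forall_fin_succ, hab] using hq.exists.choose_spec.1
    · rw [← Fin.cons_self_tail w, cons_mem_box] at hw
      rw [← Fin.cons_self_tail w]
      exact (hbox _ hw.2).2 _ hw.1

lemma exists_frequently_choice_one {k : ℕ} {R : (Fin k → N) → N → Prop}
    (hR : S.Definable (fun p : (Fin k → N) × N => R p.1 p.2))
    (h : ∃ᶠ w in iterCofinite N k, ∃ c, R w c) :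
    ∃ c : (Fin k → N) → N, S.Definable c ∧ ∃ᶠ w in iterCofinite N k, R w (c w) := by
  by_cases hinf : ∃ᶠ w in iterCofinite N k, ∃ᶠ c in cofinite, R w c
  · rw [← frequently_cofinite_iterCofinite_comm (S := S) (by fun_prop)] at hinf
    obtain ⟨c, hc⟩ := hinf.exists
    exact ⟨fun _ => c, by fun_prop, hc⟩
  · obtain ⟨c, hc, hleast⟩ := Struc.Definable.exists_isLeast hR
    refine ⟨c, hc, (h.and_eventually (not_frequently.1 hinf)).mono fun w ⟨hne, hfin⟩ => ?_⟩
    rw [frequently_cofinite_iff_infinite, not_infinite] at hfin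
    exact (hleast w (exists_isLeast_of_finite hfin hne)).1

lemma exists_frequently_choice {k n : ℕ} {R : (Fin k → N) → (Fin n → N) → Prop}
    (hR : S.Definable (fun p : (Fin k → N) × (Fin n → N) => R p.1 p.2))
    (h : ∃ᶠ w in iterCofinite N k, ∃ c, R w c) :
    ∃ c : (Fin k → N) → (Fin n → N), S.Definable c ∧ ∃ᶠ w in iterCofinite N k, R w (c w) := by
  induction n with
  | zero =>
    exact ⟨fun _ => Fin.elim0, by fun_prop, h.mono fun w ⟨c, hc⟩ =>
      Subsingleton.elim c Fin.elim0 ▸ hc⟩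
  | succ n ih =>
    obtain ⟨t, ht, hex⟩ := exists_frequently_choice_one (S := S)
      (R := fun w t => ∃ v, R w (Fin.cons t v)) (by fun_prop)
      (h.mono fun w ⟨c, hc⟩ => ⟨c 0, Fin.tail c, by rwa [Fin.cons_self_tail]⟩)
    obtain ⟨v, hv, hR⟩ := ih (R := fun w v => R w (Fin.cons (t w) v)) (by fun_prop) hex
    exact ⟨fun w => Fin.cons (t w) (v w), by fun_prop, hR⟩

lemma exists_frequently_proj {k m : ℕ} {A : (Fin k → N) → Prop}
    {f : (Fin k → N) → (Fin m → N)} (h : ∃ᶠ w in iterCofinite N k, A w) (hA : S.Definable A)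
    (hf : S.Definable f) (hinj : InjOn f {w | A w}) :
    ∃ p : Fin k → Fin m, ∃ᶠ u in iterCofinite N k, ∃ w, A w ∧ f w ∘ p = u := by
  induction k with
  | zero =>
    simp only [frequently_iterCofinite_zero] at h ⊢
    exact ⟨Fin.elim0, Fin.elim0, h, Subsingleton.elim _ _⟩
  | succ k ih =>
    rw [frequently_iterCofinite_succ, frequently_cofinite_iterCofinite_comm (S := S)
      (by fun_prop)] at h
    have hcoord : ∃ᶠ w in iterCofinite N k, ∃ i, ∃ᶠ s in cofinite,
        ∃ t, A (Fin.cons t w) ∧ f (Fin.cons t w) i = s :=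
      h.mono fun w hw => by
        have hline : InjOn (fun t => f (Fin.cons t w)) {t | A (Fin.cons t w)} :=
          fun t ht s hs e => (Fin.cons_injective2 (hinj ht hs e)).1
        simpa only [exists_mem_image, mem_ofPred_eq] using
          exists_frequently_coord ((frequently_cofinite_iff_infinite.1 hw).image hline)
    obtain ⟨i, hi⟩ := frequently_exists.1 hcoord
    rw [← frequently_cofinite_iterCofinite_comm (S := S) (by fun_prop)] at hi
    obtain ⟨τ, hτ, hτA⟩ := exists_frequently_choice_one (S := S) (k := k + 1)
      (R := fun z t => A (Fin.cons t (Fin.tail z)) ∧ f (Fin.cons t (Fin.tail z)) i = z 0)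
      (by fun_prop) (frequently_iterCofinite_succ.2 hi)
    rw [frequently_iterCofinite_succ] at hτA
    have hslice : ∃ᶠ s in cofinite, ∃ p : Fin k → Fin m, ∃ᶠ u in iterCofinite N k, ∃ w,
        (A (Fin.cons (τ (Fin.cons s w)) w) ∧ f (Fin.cons (τ (Fin.cons s w)) w) i = s) ∧
          f (Fin.cons (τ (Fin.cons s w)) w) ∘ p = u :=
      hτA.mono fun s hs => ih hs (by fun_prop)
        (f := fun w => f (Fin.cons (τ (Fin.cons s w)) w)) (by fun_prop)
        fun w hw w' hw' e => (Fin.cons_injective2 (hinj hw.1 hw'.1 e)).2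
    obtain ⟨p, hp⟩ := frequently_exists.1 hslice
    refine ⟨Fin.cons i p, frequently_iterCofinite_succ.2 (hp.mono fun s hs => hs.mono ?_)⟩
    rintro u ⟨w, ⟨hA, hi⟩, hpu⟩
    exact ⟨_, hA, by rw [Fin.comp_cons, hi, hpu]⟩

end Topology

end LargeSets

section Dimension

lemma bddAbove_odim {N : Type*} [TopologicalSpace N] {m : ℕ} (A : Set (Fin m → N)) :
    BddAbove {k | ∃ p : Fin k → Fin m, Function.Injective p ∧
      (interior ((fun x : Fin m → N => x ∘ p) '' A)).Nonempty} := by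
  refine ⟨m, ?_⟩
  rintro k ⟨p, hp, -⟩
  simpa using Fintype.card_le_of_injective p hp

variable {N : Type u} [LinearOrder N] {S : Struc N}

lemma Struc.def_image_proj {k m : ℕ} {A : Set (Fin m → N)} (hA : S.Def m A)
    (p : Fin k → Fin m) : S.Def k ((fun x : Fin m → N => x ∘ p) '' A) := by
  rw [← definable_mem_iff] at hA ⊢
  have : S.Definable (fun u => ∃ w : Fin m → N, w ∈ A ∧ (fun i => w (p i)) = u) := by fun_prop
  exact this

variable [DenselyOrdered N]

/-- In a box the coordinates vary independently, so no two of them can be projections to the same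
coordinate. -/
lemma injective_of_box_subset_proj {k m : ℕ} {A : Set (Fin m → N)} {p : Fin k → Fin m}
    {a b : Fin k → N} (hab : ∀ i, a i < b i) (h : box a b ⊆ (fun x : Fin m → N => x ∘ p) '' A) :
    Function.Injective p := by
  intro i j hij
  by_contra hne
  obtain ⟨w, hw⟩ := box_nonempty hab
  obtain ⟨c, hac, hcw⟩ := exists_between (mem_box.1 hw i).1
  have hw' : Function.update w i c ∈ box a b := by
    refine mem_box.2 fun l => ?_
    obtain rfl | hl := eq_or_ne l i
    · simpa using ⟨hac, hcw.trans (mem_box.1 hw l).2⟩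
    · simpa [hl] using mem_box.1 hw l
  have heq {u : Fin k → N} (hu : u ∈ box a b) : u i = u j := by
    obtain ⟨x, -, rfl⟩ := h hu
    simp [hij]
  have := heq hw'
  rw [Function.update_self, Function.update_of_ne (Ne.symm hne), ← heq hw] at this
  exact hcw.ne this

variable [NoMinOrder N] [NoMaxOrder N] [Nonempty N] [TopologicalSpace N] [OrderTopology N]

lemma Struc.interior_nonempty_iff {k : ℕ} {A : Set (Fin k → N)} (hA : S.Def k A) :
    (interior A).Nonempty ↔ ∃ᶠ w in iterCofinite N k, w ∈ A := by
  rw [frequently_iterCofinite_iff (definable_mem_iff.2 hA)]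
  constructor
  · rintro ⟨x, hx⟩
    rw [mem_interior_iff_mem_nhds, nhds_pi, Filter.mem_pi] at hx
    obtain ⟨I, -, t, ht, hsub⟩ := hx
    choose a b hx' hab using fun i => mem_nhds_iff_exists_Ioo_subset.1 (ht i)
    exact ⟨a, b, fun i => (hx' i).1.trans (hx' i).2,
      fun w hw => hsub fun i _ => hab i (mem_box.1 hw i)⟩
  · rintro ⟨a, b, hab, hbox⟩
    have hopen : IsOpen (box a b) := isOpen_set_pi finite_univ fun i _ => isOpen_Ioo
    exact (box_nonempty hab).mono (hopen.subset_interior_iff.2 hbox)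

lemma le_odim {k m : ℕ} {A : Set (Fin m → N)} (hA : S.Def m A) (p : Fin k → Fin m)
    (h : ∃ᶠ u in iterCofinite N k, ∃ w ∈ A, w ∘ p = u) : k ≤ odim A := by
  have hAp := S.def_image_proj hA p
  obtain ⟨a, b, hab, hbox⟩ := (frequently_iterCofinite_iff (definable_mem_iff.2 hAp)).1 h
  exact le_csSup (bddAbove_odim A)
    ⟨p, injective_of_box_subset_proj hab hbox, (S.interior_nonempty_iff hAp).2 h⟩

lemma exists_frequently_proj_odim {m : ℕ} {A : Set (Fin m → N)} (hA : S.Def m A)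
    (hne : A.Nonempty) :
    ∃ p : Fin (odim A) → Fin m, ∃ᶠ u in iterCofinite N (odim A), ∃ w ∈ A, w ∘ p = u := by
  have hzero : ∃ p : Fin 0 → Fin m, Function.Injective p ∧
      (interior ((fun x : Fin m → N => x ∘ p) '' A)).Nonempty := by
    obtain ⟨x, hx⟩ := hne
    refine ⟨Fin.elim0, fun i => i.elim0, (S.interior_nonempty_iff (S.def_image_proj hA _)).2 ?_⟩
    exact frequently_iterCofinite_zero.2 ⟨x, hx, Subsingleton.elim _ _⟩
  obtain ⟨p, -, hp⟩ := Nat.sSup_mem ⟨0, hzero⟩ (bddAbove_odim A)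
  exact ⟨p, (S.interior_nonempty_iff (S.def_image_proj hA p)).1 hp⟩

/-- For almost all coordinate vectors `u`, only finitely many points of `A` lie over `u`; hence only
finitely many `b` are related to them. -/
lemma not_frequently_frequently_injOn {m : ℕ} {A : Set (Fin m → N)} (hA : S.Def m A)
    {R : (Fin m → N) → N → Prop} (hR : S.Definable (fun z : (Fin m → N) × N => R z.1 z.2))
    (hfin : ∀ y ∈ A, ∀ᶠ b in cofinite, ¬ R y b) {D : N → (Fin (odim A) → N) → Prop}
    (hD : S.Definable (fun z : N × (Fin (odim A) → N) => D z.1 z.2))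
    {f : N → (Fin (odim A) → N) → Fin m → N}
    (hf : S.Definable (fun z : N × (Fin (odim A) → N) => f z.1 z.2))
    (hmaps : ∀ b w, D b w → f b w ∈ A ∧ R (f b w) b) (hinj : ∀ b, InjOn (f b) {w | D b w}) :
    ¬ ∃ᶠ b in cofinite, ∃ᶠ w in iterCofinite N (odim A), D b w := by
  intro h
  have hAdef : S.Definable (fun y => y ∈ A) := definable_mem_iff.2 hA
  obtain ⟨p, hp⟩ : ∃ p : Fin (odim A) → Fin m, ∃ᶠ b in cofinite,
      ∃ᶠ u in iterCofinite N (odim A), ∃ y, (y ∈ A ∧ y ∘ p = u) ∧ R y b := by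
    refine frequently_exists.1 (h.mono fun b hb => ?_)
    obtain ⟨p, hp⟩ := exists_frequently_proj (S := S) hb (by fun_prop) (by fun_prop) (hinj b)
    exact ⟨p, hp.mono fun u ⟨w, hw, hwu⟩ =>
      ⟨f b w, ⟨(hmaps b w hw).1, hwu⟩, (hmaps b w hw).2⟩⟩
  rw [frequently_cofinite_iterCofinite_comm (S := S) (by unfold Function.comp; fun_prop)] at hp
  obtain ⟨i, hi⟩ : ∃ i, ∃ᶠ u in iterCofinite N (odim A), ∃ᶠ t in cofinite,
      ∃ y, (y ∈ A ∧ y ∘ p = u) ∧ y i = t := by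
    refine frequently_exists.1 (hp.mono fun u hu => ?_)
    have hinf : {y | y ∈ A ∧ y ∘ p = u}.Infinite := fun hfiber => hu <| by
      filter_upwards [(eventually_all_finite hfiber).2 fun y hy => hfin y hy.1] with b hb
      exact fun ⟨y, hy, hRyb⟩ => hb y hy hRyb
    exact exists_frequently_coord hinf
  rw [← frequently_cofinite_iterCofinite_comm (S := S) (by unfold Function.comp; fun_prop)] at hi
  have hcons : ∃ᶠ u in iterCofinite N (odim A + 1), ∃ y ∈ A, y ∘ Fin.cons i p = u :=
    frequently_iterCofinite_succ.2 (hi.mono fun t ht => ht.mono fun u ⟨y, ⟨hy, hyu⟩, hyt⟩ =>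
      ⟨y, hy, by rw [← hyt, ← hyu]; exact Fin.comp_cons y i p⟩)
  exact (le_odim hA _ hcons).not_gt (Nat.lt_succ_self _)

end Dimension

section Continuity

variable {N : Type u} [LinearOrder N] [NoMinOrder N] [NoMaxOrder N] [TopologicalSpace N]
  [OrderTopology N] {S : Struc N}

@[fun_prop]
lemma Struc.Definable.frequently_nhds {Γ : Type u} [DefSort N Γ] {P : Γ → N → Prop} {c : Γ → N}
    (hP : S.Definable (fun p : Γ × N => P p.1 p.2)) (hc : S.Definable c) :
    S.Definable (fun x => ∃ᶠ t in 𝓝 (c x), P x t) := by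
  have : S.Definable (fun x => ∀ a b, c x ∈ Ioo a b → ∃ t, t ∈ Ioo a b ∧ P x t) := by fun_prop
  refine this.congr fun x => ((nhds_basis_Ioo (c x)).frequently_iff).trans ?_
  simp only [Prod.forall, Set.mem_Ioo]

@[fun_prop]
lemma Struc.Definable.continuousAt {Γ : Type u} [DefSort N Γ] {m : ℕ} {f : Γ → N → Fin m → N}
    {c : Γ → N} (hf : S.Definable (fun p : Γ × N => f p.1 p.2))
    (hc : S.Definable c) : S.Definable (fun x => ContinuousAt (fun s => f x s) (c x)) := by
  have : S.Definable (fun x => ∀ i,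
      (∀ e, e < f x (c x) i → ¬ ∃ᶠ s in 𝓝 (c x), ¬ e < f x s i) ∧
        ∀ e, f x (c x) i < e → ¬ ∃ᶠ s in 𝓝 (c x), ¬ f x s i < e) := by fun_prop
  refine this.congr fun x => continuousAt_pi.trans (forall_congr' fun i => ?_)
  simp only [ContinuousAt, tendsto_order, not_frequently, not_not, gt_iff_lt]

variable [DenselyOrdered N] [Nonempty N]

lemma eventually_eventually_not_rel_or {Q : N → N → Prop}
    (hQ : S.Definable (fun p : N × N => Q p.1 p.2)) :
    ∀ᶠ t in cofinite, ∀ᶠ c in cofinite, Q t c ∨ ∀ᶠ s in 𝓝 t, ¬ Q s c := by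
  by_contra hcon
  obtain ⟨c, hc⟩ := exists_frequently_of_frequently_frequently (S := S)
    (R := fun t c => ¬ Q t c ∧ ∃ᶠ s in 𝓝 t, Q s c) (by fun_prop)
    ((not_eventually.1 hcon).mono fun t ht => (not_eventually.1 ht).mono fun c hc => not_or.1 hc)
  obtain ⟨p, q, hpq, hI⟩ := (Struc.Definable.frequently_cofinite_iff (S := S) (by fun_prop)).1 hc
  obtain ⟨t, ht⟩ := exists_between hpq
  obtain ⟨s, hs, hsI⟩ := ((hI t ht).2.and_eventually (Ioo_mem_nhds ht.1 ht.2)).exists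
  exact (hI s hsI).1 hs

lemma Struc.Definable.eventually_continuousAt {f : N → N} (hf : S.Definable f) :
    ∀ᶠ t in cofinite, ContinuousAt f t := by
  filter_upwards [eventually_eventually_not_rel_or (S := S) (Q := fun t c => f t ≤ c) (by fun_prop),
    eventually_eventually_not_rel_or (S := S) (Q := fun t c => c ≤ f t) (by fun_prop)]
    with t hle hge
  refine tendsto_order.2 ⟨fun a ha => ?_, fun a ha => ?_⟩
  · obtain ⟨c, hc, hac⟩ :=
      ((frequently_cofinite_of_Ioo ha fun c hc => hc).and_eventually hle).exists
    exact (hac.resolve_left hc.2.not_ge).mono fun s hs => hc.1.trans (not_le.1 hs)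
  · obtain ⟨c, hc, hca⟩ :=
      ((frequently_cofinite_of_Ioo ha fun c hc => hc).and_eventually hge).exists
    exact (hca.resolve_left hc.1.not_ge).mono fun s hs => (not_le.1 hs).trans hc.2

lemma Struc.Definable.eventually_continuousAt_pi {m : ℕ} {f : N → Fin m → N} (hf : S.Definable f) :
    ∀ᶠ t in cofinite, ContinuousAt f t := by
  simp only [continuousAt_pi, eventually_all]
  exact fun i => (hf.apply i).eventually_continuousAt

end Continuity

section Choice

variable {N : Type u} [LinearOrder N] {S : Struc N} {Γ Δ : Type u} [DefSort N Γ] [DefSort N Δ]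

lemma Struc.Definable.exists_of_finite [Nonempty Δ] {ι : Type*} [Finite ι] {R : Γ → Δ → Prop}
    (hR : S.Definable (fun p : Γ × Δ => R p.1 p.2)) {c : ι → Γ → Δ} (hc : ∀ i, S.Definable (c i)) :
    ∃ e : Γ → Δ, S.Definable e ∧ ∀ x, (∃ i, R x (c i x)) → R x (e x) := by
  classical
  cases nonempty_fintype ι
  suffices ∀ s : Finset ι, ∃ e : Γ → Δ, S.Definable e ∧ ∀ x, (∃ i ∈ s, R x (c i x)) → R x (e x) by
    simpa using this Finset.univ
  intro s
  induction s using Finset.induction_on with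
  | empty => exact ⟨fun _ => Classical.arbitrary Δ, by fun_prop, by simp⟩
  | insert j s _ ih =>
    obtain ⟨e, he, hRe⟩ := ih
    have hRj : S.Definable (fun x => R x (c j x)) := hR.comp (id'.prodMk (hc j))
    refine ⟨fun x => if R x (c j x) then c j x else e x, hRj.ite (hc j) he,
      fun x ⟨i, hi, hRi⟩ => ?_⟩
    beta_reduce
    split_ifs with hj
    · exact hj
    · obtain rfl | hi := Finset.mem_insert.1 hi
      exacts [absurd hRi hj, hRe x ⟨i, hi, hRi⟩]

variable [TopologicalSpace N] [OrderTopology N] [NoMaxOrder N]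

lemma Struc.Definable.eventually_nhdsGT_of_isGLB {P : N → Prop} (hP : S.Definable P) {a : N}
    (ha : IsGLB {t | P t} a) (hleast : ¬ P a) : ∀ᶠ t in 𝓝[>] a, P t := by
  refine (hP.eventually_nhdsGT_or_not a).resolve_right fun hnot => ?_
  obtain ⟨d, had, hd⟩ := mem_nhdsGT_iff_exists_Ioo_subset.1 hnot
  obtain ⟨t, ht, hat, htd⟩ := ha.exists_between had
  refine hd ⟨lt_of_le_of_ne hat ?_, htd⟩ ht
  rintro rfl
  exact hleast ht

variable [DenselyOrdered N] [Nonempty N]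

lemma Struc.Definable.exists_Ioo_subset {P : Γ → N → Prop} {a : Γ → N}
    (hP : S.Definable (fun p : Γ × N => P p.1 p.2)) (ha : S.Definable a) :
    ∃ b : Γ → N, S.Definable b ∧ ∀ x, (∀ᶠ t in 𝓝[>] (a x), P x t) → (∃ t, a x < t ∧ ¬ P x t) →
      a x < b x ∧ (∀ t ∈ Ioo (a x) (b x), P x t) ∧ ∀ t, a x < t → ¬ P x t → b x ≤ t := by
  obtain ⟨b, hb, hglb⟩ := exists_isGLB (S := S) (P := fun x t => a x < t ∧ ¬ P x t) (by fun_prop)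
  refine ⟨b, hb, fun x hgerm hex => ?_⟩
  replace hglb := hglb x hex ⟨a x, fun t ht => ht.1.le⟩
  obtain ⟨d, had, hd⟩ := mem_nhdsGT_iff_exists_Ioo_subset.1 hgerm
  refine ⟨had.trans_le (hglb.2 fun t ht => ?_), fun t ht => ?_, fun t hat ht => hglb.1 ⟨hat, ht⟩⟩
  · by_contra! htd
    exact ht.2 (hd ⟨ht.1, htd⟩)
  · by_contra hPt
    exact ht.2.not_ge (hglb.1 ⟨ht.1, hPt⟩)

lemma Struc.Definable.exists_mem_Ioo_of_eventually [NoMinOrder N] {P : Γ → N → Prop} {a b : Γ → N}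
    (hP : S.Definable (fun p : Γ × N => P p.1 p.2)) (ha : S.Definable a) :
    ∃ c : Γ → N, S.Definable c ∧ ∀ x, a x < b x → (∀ᶠ t in 𝓝[>] (a x), P x t) →
      (∀ᶠ t in 𝓝[<] (b x), ¬ P x t) → c x ∈ Ioo (a x) (b x) := by
  obtain ⟨c, hc, h⟩ := hP.exists_Ioo_subset ha
  refine ⟨c, hc, fun x hab hgt hlt => ?_⟩
  obtain ⟨t, hPt, hat, htb⟩ := (hlt.and (Ioo_mem_nhdsLT hab)).exists
  obtain ⟨hac, -, hle⟩ := h x hgt ⟨t, hat, hPt⟩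
  exact ⟨hac, (hle t hat hPt).trans_lt htb⟩

/-- The interval `(p, q)` is choosable if some definable function picks a point in each of its
nonempty open subintervals. Without an ambient group this can fail, and it is the only obstruction
to definable choice from subsets of `(p, q)`. -/
def Choosable (S : Struc N) (p q : N) : Prop :=
  ∃ mid : N × N → N, S.Definable mid ∧ ∀ a b, p ≤ a → a < b → b ≤ q → mid (a, b) ∈ Ioo a b

lemma Choosable.exists_choice {p q : N} (h : Choosable S p q) {R : Γ → N → Prop}
    (hR : S.Definable (fun z : Γ × N => R z.1 z.2)) :
    ∃ c : Γ → N, S.Definable c ∧ ∀ x, (∃ t ∈ Ioo p q, R x t) → c x ∈ Ioo p q ∧ R x (c x) := by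
  obtain ⟨mid, hmid, hmem⟩ := h
  let P : Γ → N → Prop := fun x t => t ∈ Ioo p q ∧ R x t
  obtain ⟨a, ha, hglb⟩ := Struc.Definable.exists_isGLB (S := S) (P := P) (by fun_prop)
  obtain ⟨b, hb, hint⟩ := Struc.Definable.exists_Ioo_subset (S := S) (P := P) (by fun_prop) ha
  obtain ⟨e, he, hPe⟩ := Struc.Definable.exists_of_finite (S := S) (R := P) (by fun_prop)
    (c := ![a, fun x => mid (a x, b x)]) (by simpa [Fin.forall_fin_two] using ⟨ha, by fun_prop⟩)
  refine ⟨e, he, fun x hx => hPe x ?_⟩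
  rw [Fin.exists_fin_two]
  refine or_iff_not_imp_left.2 fun hPa => ?_
  replace hglb := hglb x hx ⟨p, fun t ht => ht.1.1.le⟩
  have hgerm : ∀ᶠ t in 𝓝[>] (a x), P x t :=
    (show S.Definable (P x) by fun_prop).eventually_nhdsGT_of_isGLB hglb hPa
  obtain ⟨t, ht⟩ := hx
  have haq : a x < q := (hglb.1 ht).trans_lt ht.1.2
  have hPq : ¬ P x q := fun h => h.1.2.false
  obtain ⟨hab, hsub, hle⟩ := hint x hgerm ⟨q, haq, hPq⟩
  exact hsub _ (hmem _ _ (hglb.2 fun t ht => ht.1.1.le) hab (hle q haq hPq))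

lemma exists_choice_box {k : ℕ} {p q : Fin k → N} (h : ∀ i, Choosable S (p i) (q i))
    {R : Γ → (Fin k → N) → Prop} (hR : S.Definable (fun z : Γ × (Fin k → N) => R z.1 z.2)) :
    ∃ c : Γ → (Fin k → N), S.Definable c ∧
      ∀ x, (∃ w ∈ box p q, R x w) → c x ∈ box p q ∧ R x (c x) := by
  induction k with
  | zero =>
    exact ⟨fun _ => Fin.elim0, by fun_prop, fun x ⟨w, hw, hRw⟩ =>
      Subsingleton.elim w Fin.elim0 ▸ ⟨hw, hRw⟩⟩
  | succ k ih =>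
    obtain ⟨c, hc, hRc⟩ := (h 0).exists_choice (S := S)
      (R := fun x t => ∃ w, w ∈ box (Fin.tail p) (Fin.tail q) ∧ R x (Fin.cons t w)) (by fun_prop)
    obtain ⟨d, hd, hRd⟩ := ih (p := Fin.tail p) (q := Fin.tail q) (fun i => h i.succ)
      (R := fun x w => R x (Fin.cons (c x) w)) (by fun_prop)
    refine ⟨fun x => Fin.cons (c x) (d x), by fun_prop, fun x ⟨w, hw, hRw⟩ => ?_⟩
    rw [← Fin.cons_self_tail p, ← Fin.cons_self_tail q] at hw ⊢
    rw [← Fin.cons_self_tail w] at hw hRw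
    rw [cons_mem_box] at hw ⊢
    obtain ⟨hcmem, hex⟩ := hRc x ⟨w 0, hw.1, Fin.tail w, hw.2, hRw⟩
    obtain ⟨hdmem, hRd⟩ := hRd x hex
    exact ⟨⟨hcmem, hdmem⟩, hRd⟩

/-- Between `a` and `b` some coordinate of `H a s` and `H s b` changes order, as the two functions
of `s` exchange their values `v` and `H a b` at the endpoints; the first change is definable. -/
lemma choosable_of_diagonal [NoMinOrder N] {m : ℕ} {H : N → N → Fin m → N}
    (hH : S.Definable (fun z : N × N => H z.1 z.2)) {v : Fin m → N} {p q : N}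
    (hdiag : ∀ a ∈ Icc p q, H a a = v) (hoff : ∀ a ∈ Icc p q, ∀ b ∈ Icc p q, a < b → H a b ≠ v)
    (hcont : ∀ a ∈ Icc p q, ∀ b ∈ Icc p q,
      ContinuousAt (fun s => H a s) b ∧ ContinuousAt (fun s => H s b) a) : Choosable S p q := by
  let P : Fin m ⊕ Fin m → N × N → N → Prop :=
    Sum.elim (fun i z s => H z.1 s i < H s z.2 i) (fun i z s => H s z.2 i < H z.1 s i)
  have hP (j) : S.Definable (fun y : (N × N) × N => P j y.1 y.2) := by
    obtain i | i := j <;> simp only [P, Sum.elim_inl, Sum.elim_inr] <;> fun_prop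
  choose c hc hmem using fun j => (hP j).exists_mem_Ioo_of_eventually (a := fun z : N × N => z.1)
    (b := fun z => z.2) (by fun_prop)
  obtain ⟨mid, hmid, hR⟩ := Struc.Definable.exists_of_finite (S := S)
    (R := fun (z : N × N) t => t ∈ Ioo z.1 z.2) (by fun_prop) hc
  refine ⟨mid, hmid, fun a b hpa hab hbq => hR (a, b) ?_⟩
  have ha : a ∈ Icc p q := ⟨hpa, hab.le.trans hbq⟩
  have hb : b ∈ Icc p q := ⟨hpa.trans hab.le, hbq⟩
  obtain ⟨i, hi⟩ := Function.ne_iff.1 (hoff a ha b hb hab)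
  have hright (s) (hs : s ∈ Icc p q) : ContinuousAt (fun s => H a s i) s :=
    continuousAt_pi.1 (hcont a ha s hs).1 i
  have hleft (s) (hs : s ∈ Icc p q) : ContinuousAt (fun s => H s b i) s :=
    continuousAt_pi.1 (hcont s hs b hb).2 i
  obtain hlt | hlt := lt_or_gt_of_ne hi
  · refine ⟨.inr i, hmem (.inr i) (a, b) hab ?_ ?_⟩
    · exact nhdsWithin_le_nhds ((hleft a ha).eventually_lt (hright a ha) (by rwa [hdiag a ha]))
    · exact nhdsWithin_le_nhds (((hright b hb).eventually_lt (hleft b hb)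
        (by rwa [hdiag b hb])).mono fun s => not_lt_of_gt)
  · refine ⟨.inl i, hmem (.inl i) (a, b) hab ?_ ?_⟩
    · exact nhdsWithin_le_nhds ((hright a ha).eventually_lt (hleft a ha) (by rwa [hdiag a ha]))
    · exact nhdsWithin_le_nhds (((hleft b hb).eventually_lt (hright b hb)
        (by rwa [hdiag b hb])).mono fun s => not_lt_of_gt)

end Choice

section GroupOperations

variable {N : Type u} [LinearOrder N] [TopologicalSpace N] {S : Struc N} {m : ℕ}

namespace DefGroup

open Classical in
/-- The multiplication of `G`, extended by a junk value outside of `G` so that it becomes a total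
definable function. -/
noncomputable def totalMul (G : DefGroup S m) (x y : Fin m → N) : Fin m → N :=
  if x ∈ G.carrier ∧ y ∈ G.carrier then G.mul x y else x

open Classical in
/-- The inversion of `G`, extended by a junk value outside of `G` so that it becomes a total
definable function. -/
noncomputable def totalInv (G : DefGroup S m) (x : Fin m → N) : Fin m → N :=
  if x ∈ G.carrier then G.inv x else x

variable {G : DefGroup S m} {x y z : Fin m → N}

lemma exists_elt (hx : x ∈ G.carrier) : ∃ a : G.Elt, a.1 = x := ⟨⟨x, hx⟩, rfl⟩

lemma totalMul_coe (a b : G.Elt) : G.totalMul a.1 b.1 = (a * b).1 := if_pos ⟨a.2, b.2⟩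

lemma totalInv_coe (a : G.Elt) : G.totalInv a.1 = (a⁻¹).1 := if_pos a.2

lemma totalMul_mem (hx : x ∈ G.carrier) (hy : y ∈ G.carrier) : G.totalMul x y ∈ G.carrier :=
  totalMul_coe ⟨x, hx⟩ ⟨y, hy⟩ ▸ (⟨x, hx⟩ * ⟨y, hy⟩ : G.Elt).2

lemma totalInv_mem (hx : x ∈ G.carrier) : G.totalInv x ∈ G.carrier :=
  totalInv_coe ⟨x, hx⟩ ▸ (⟨x, hx⟩⁻¹ : G.Elt).2

lemma totalMul_totalMul_totalInv (hx : x ∈ G.carrier) (hy : y ∈ G.carrier) :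
    G.totalMul (G.totalMul x y) (G.totalInv y) = x := by
  obtain ⟨x, rfl⟩ := exists_elt hx
  obtain ⟨y, rfl⟩ := exists_elt hy
  simp only [totalInv_coe, totalMul_coe, mul_inv_cancel_right]

lemma injOn_totalMul_left (hx : x ∈ G.carrier) : InjOn (G.totalMul x) G.carrier := by
  intro y hy z hz h
  obtain ⟨x, rfl⟩ := exists_elt hx
  obtain ⟨y, rfl⟩ := exists_elt hy
  obtain ⟨z, rfl⟩ := exists_elt hz
  rw [totalMul_coe, totalMul_coe] at h
  have hxyz : x * y = x * z := Subtype.ext h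
  rw [mul_left_cancel hxyz]

lemma injOn_totalMul_right (hx : x ∈ G.carrier) : InjOn (fun y => G.totalMul y x) G.carrier :=
  fun y hy z hz h => by
    beta_reduce at h
    rw [← totalMul_totalMul_totalInv hy hx, ← totalMul_totalMul_totalInv hz hx, h]

/-- The product `x * g⁻¹ * h * y`. It detects whether `g = h`, and varying `x` and `y` makes it
continuous in `g` and `h`. -/
noncomputable def sandwich (G : DefGroup S m) (x y g h : Fin m → N) : Fin m → N :=
  G.totalMul (G.totalMul x (G.totalInv g)) (G.totalMul h y)

lemma sandwich_eq_totalMul_iff {g h : Fin m → N} (hx : x ∈ G.carrier) (hy : y ∈ G.carrier)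
    (hg : g ∈ G.carrier) (hh : h ∈ G.carrier) :
    G.sandwich x y g h = G.totalMul x y ↔ g = h := by
  obtain ⟨x, rfl⟩ := exists_elt hx
  obtain ⟨y, rfl⟩ := exists_elt hy
  obtain ⟨g, rfl⟩ := exists_elt hg
  obtain ⟨h, rfl⟩ := exists_elt hh
  have hgroup : x * g⁻¹ * (h * y) = x * y ↔ g = h := by
    rw [mul_assoc, mul_right_inj, ← mul_assoc, mul_eq_right, inv_mul_eq_one]
  simp only [sandwich, totalInv_coe, totalMul_coe]
  exact Subtype.ext_iff.symm.trans (hgroup.trans Subtype.ext_iff)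

end DefGroup

end GroupOperations

section GroupDefinability

variable {N : Type u} [LinearOrder N] {S : Struc N} {Γ : Type u} [DefSort N Γ] {m n : ℕ}

lemma Struc.Definable.mem {A : Set (Fin m → N)} (hA : S.Def m A) {f : Γ → Fin m → N}
    (hf : S.Definable f) : S.Definable (fun x => f x ∈ A) :=
  (definable_mem_iff.2 hA).comp hf

lemma definable_of_defFunOn {A : Set (Fin m → N)} {f : (Fin m → N) → (Fin n → N)}
    (h : S.DefFunOn A f) :
    S.Definable (fun p : (Fin m → N) × (Fin n → N) => p.1 ∈ A ∧ f p.1 = p.2) := by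
  refine (Struc.Definable.mem h
    (f := fun p : (Fin m → N) × (Fin n → N) => Fin.append p.1 p.2) (by fun_prop)).congr fun p => ?_
  have e₁ : Fin.append p.1 p.2 ∘ Fin.castAdd n = p.1 := by ext; simp
  have e₂ : Fin.append p.1 p.2 ∘ Fin.natAdd m = p.2 := by ext; simp
  rw [mem_ofPred_eq, e₁, e₂]

lemma defFunOn_of_definable {A : Set (Fin m → N)} (hA : S.Def m A)
    {f : (Fin m → N) → (Fin n → N)} (h : S.Definable f) : S.DefFunOn A f :=
  definable_mem_iff.1 <|
    (Struc.Definable.mem hA (f := fun z : Fin (m + n) → N => z ∘ Fin.castAdd n)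
      (by unfold Function.comp; fun_prop)).and <| by unfold Function.comp; fun_prop

variable [TopologicalSpace N]

namespace DefGroup

@[fun_prop]
lemma definable_mem_carrier (G : DefGroup S m) {f : Γ → Fin m → N} (hf : S.Definable f) :
    S.Definable (fun x => f x ∈ G.carrier) :=
  .mem G.carrier_def hf

lemma definable_mul (G : DefGroup S m) : S.Definable
    (fun p : ((Fin m → N) × (Fin m → N)) × (Fin m → N) =>
      (p.1.1 ∈ G.carrier ∧ p.1.2 ∈ G.carrier) ∧ G.mul p.1.1 p.1.2 = p.2) := by
  refine (Struc.Definable.mem G.mul_graph_def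
    (f := fun p : ((Fin m → N) × (Fin m → N)) × (Fin m → N) =>
      Fin.append (Fin.append p.1.1 p.1.2) p.2) (by fun_prop)).congr fun p => ?_
  set z := Fin.append (Fin.append p.1.1 p.1.2) p.2 with hz
  have e1 : z ∘ Fin.castAdd m ∘ Fin.castAdd m = p.1.1 := by ext; simp [hz]
  have e2 : z ∘ Fin.castAdd m ∘ Fin.natAdd m = p.1.2 :=
    funext fun i => (Fin.append_left _ _ _).trans (Fin.append_right _ _ _)
  have e3 : z ∘ Fin.natAdd (m + m) = p.2 := by ext; simp [hz]
  rw [mem_ofPred_eq, e1, e2, e3, and_assoc]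

@[fun_prop]
lemma definable_totalMul (G : DefGroup S m) {f g : Γ → Fin m → N} (hf : S.Definable f)
    (hg : S.Definable g) : S.Definable (fun x => G.totalMul (f x) (g x)) := by
  suffices S.Definable (fun p : (Fin m → N) × (Fin m → N) => G.totalMul p.1 p.2) from
    this.comp (hf.prodMk hg)
  refine .of_graph ((G.definable_mul.or (Q := fun p =>
    ¬ (p.1.1 ∈ G.carrier ∧ p.1.2 ∈ G.carrier) ∧ p.2 = p.1.1) (by fun_prop)).congr fun p => ?_)
  rw [totalMul]
  split_ifs with h
  · simp [h, @eq_comm _ p.2]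
  · simp [h]

@[fun_prop]
lemma definable_totalInv (G : DefGroup S m) {f : Γ → Fin m → N} (hf : S.Definable f) :
    S.Definable (fun x => G.totalInv (f x)) := by
  suffices S.Definable (fun x : Fin m → N => G.totalInv x) from this.comp hf
  refine .of_graph (((definable_of_defFunOn G.inv_graph_def).or (Q := fun p =>
    p.1 ∉ G.carrier ∧ p.2 = p.1) (by fun_prop)).congr fun p => ?_)
  rw [totalInv]
  split_ifs with h
  · simp [h, @eq_comm _ p.2]
  · simp [h]

@[fun_prop]
lemma definable_sandwich (G : DefGroup S m) {x y g h : Γ → Fin m → N}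
    (hx : S.Definable x) (hy : S.Definable y) (hg : S.Definable g) (hh : S.Definable h) :
    S.Definable (fun z => G.sandwich (x z) (y z) (g z) (h z)) := by
  unfold sandwich
  fun_prop

end DefGroup

end GroupDefinability

section Choosable

variable {N : Type u} [LinearOrder N] [DenselyOrdered N] [NoMinOrder N] [NoMaxOrder N]
  [TopologicalSpace N] [OrderTopology N] {S : Struc N} {m : ℕ}

lemma exists_Ioo_forall_of_eventually_cofinite {R : N → N → Prop}
    (hR : S.Definable (fun p : N × N => R p.1 p.2)) {a b : N} (hab : a < b)
    (hdiag : ∀ t ∈ Ioo a b, R t t) (h : ∀ t ∈ Ioo a b, ∀ᶠ s in cofinite, R t s) :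
    ∃ p q, p < q ∧ Ioo p q ⊆ Ioo a b ∧ ∀ t ∈ Ioo p q, ∀ s ∈ Ioo p q, R t s := by
  have hne (t) (ht : t ∈ Ioo a b) : ∀ᶠ s in 𝓝[≠] t, R t s :=
    (h t ht).filter_mono (nhdsNE_le_cofinite t)
  obtain ⟨c, d, hcd, hsub, hgt⟩ := exists_Ioo_forall_of_eventually_nhdsGT hR hab fun t ht =>
    (hne t ht).filter_mono (nhdsGT_le_nhdsNE t)
  obtain ⟨p, q, hpq, hsub', hlt⟩ := exists_Ioo_forall_of_eventually_nhdsLT hR hcd fun t ht =>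
    (hne t (hsub ht)).filter_mono (nhdsLT_le_nhdsNE t)
  refine ⟨p, q, hpq, hsub'.trans hsub, fun t ht s hs => ?_⟩
  obtain hst | rfl | hts := lt_trichotomy s t
  · exact hlt t ht s hs hst
  · exact hdiag s (hsub (hsub' hs))
  · exact hgt t (hsub' ht) s (hsub' hs) hts

variable [Nonempty N]

lemma exists_injOn_box {A : Set (Fin m → N)} (hA : S.Def m A) (hne : A.Nonempty) :
    ∃ (s : (Fin (odim A) → N) → Fin m → N) (a b : Fin (odim A) → N), S.Definable s ∧
      (∀ i, a i < b i) ∧ MapsTo s (box a b) A ∧ InjOn s (box a b) := by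
  obtain ⟨p, hp⟩ := exists_frequently_proj_odim hA hne
  have hrel : S.Definable (fun z : (Fin (odim A) → N) × (Fin m → N) => z.2 ∈ A ∧ z.2 ∘ p = z.1) :=
    (Struc.Definable.mem hA (by fun_prop)).and (by unfold Function.comp; fun_prop)
  obtain ⟨s, hs, hfreq⟩ := exists_frequently_choice (S := S)
    (R := fun u w => w ∈ A ∧ w ∘ p = u) hrel hp
  obtain ⟨a, b, hab, hbox⟩ := (frequently_iterCofinite_iff (S := S)
    (hrel.comp (Struc.Definable.id'.prodMk hs))).1 hfreq
  exact ⟨s, a, b, hs, hab, fun w hw => (hbox w hw).1, fun w hw w' hw' h => by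
    simpa only [h, (hbox w' hw').2] using (hbox w hw).2.symm⟩

lemma eventually_eventually_continuousAt_of_injOn {A : Set (Fin m → N)} (hA : S.Def m A) {k : ℕ}
    {f : (Fin m → N) → N → Fin k → N} (hf : S.Definable (fun z : (Fin m → N) × N => f z.1 z.2))
    {D : N → (Fin (odim A) → N) → Prop}
    (hD : S.Definable (fun z : N × (Fin (odim A) → N) => D z.1 z.2))
    {g : N → (Fin (odim A) → N) → Fin m → N}
    (hg : S.Definable (fun z : N × (Fin (odim A) → N) => g z.1 z.2))
    (hmaps : ∀ t w, D t w → g t w ∈ A) (hinj : ∀ t, InjOn (g t) {w | D t w}) :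
    ∀ᶠ w in iterCofinite N (odim A), ∀ᶠ t in cofinite, D t w → ContinuousAt (f (g t w)) t := by
  by_contra h
  simp only [not_eventually, Classical.not_imp] at h
  rw [← frequently_cofinite_iterCofinite_comm (S := S) (by fun_prop)] at h
  exact not_frequently_frequently_injOn hA (R := fun y t => ¬ ContinuousAt (f y) t) (by fun_prop)
    (fun y _ => by simpa only [not_not] using (hf.curry_right y).eventually_continuousAt_pi)
    (by fun_prop) hg (fun t w hw => ⟨hmaps t w hw.1, hw.2⟩)
    (fun t => (hinj t).mono fun w hw => hw.1) h

namespace DefGroup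

/-- The factors `γ t * y` and `x * (γ t)⁻¹` are generic points of `G` for generic `y` and `x`, hence
avoid the finitely many discontinuities of the product in its other factor. -/
lemma exists_eventually_continuousAt_sandwich (G : DefGroup S m) {γ : N → Fin m → N}
    (hγ : S.Definable γ) {I : N → Prop} (hI : S.Definable I) (hmem : ∀ t, I t → γ t ∈ G.carrier) :
    ∃ x ∈ G.carrier, ∃ y ∈ G.carrier, ∀ᶠ t in cofinite, I t →
      ContinuousAt (fun s => G.sandwich x y (γ t) (γ s)) t ∧
        ContinuousAt (fun s => G.sandwich x y (γ s) (γ t)) t := by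
  obtain ⟨c, a, b, hc, hab, hmaps, hinj⟩ := exists_injOn_box G.carrier_def ⟨_, G.one_mem⟩
  have hright (z) : ∀ᶠ w in iterCofinite N (odim G.carrier), ∀ᶠ t in cofinite,
      I t ∧ w ∈ box a b → ContinuousAt (fun s => G.sandwich (c z) (c w) (γ s) (γ t)) t :=
    eventually_eventually_continuousAt_of_injOn G.carrier_def
      (f := fun y s => G.totalMul (G.totalMul (c z) (G.totalInv (γ s))) y) (by fun_prop)
      (by fun_prop) (g := fun t w => G.totalMul (γ t) (c w)) (by fun_prop)
      (fun t w hw => totalMul_mem (hmem t hw.1) (hmaps hw.2)) fun t w hw w' hw' h =>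
        hinj hw.2 hw'.2 (injOn_totalMul_left (hmem t hw.1) (hmaps hw.2) (hmaps hw'.2) h)
  have hleft (w) : ∀ᶠ z in iterCofinite N (odim G.carrier), ∀ᶠ t in cofinite,
      I t ∧ z ∈ box a b → ContinuousAt (fun s => G.sandwich (c z) (c w) (γ t) (γ s)) t :=
    eventually_eventually_continuousAt_of_injOn G.carrier_def
      (f := fun y s => G.totalMul y (G.totalMul (γ s) (c w))) (by fun_prop) (by fun_prop)
      (g := fun t z => G.totalMul (c z) (G.totalInv (γ t))) (by fun_prop)
      (fun t z hz => totalMul_mem (hmaps hz.2) (totalInv_mem (hmem t hz.1)))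
      fun t z hz z' hz' h => hinj hz.2 hz'.2
        (injOn_totalMul_right (totalInv_mem (hmem t hz.1)) (hmaps hz.2) (hmaps hz'.2) h)
  have hbox := frequently_iterCofinite_box hab
  obtain ⟨z, hz, hzw⟩ := (hbox.and_eventually
    (eventually_iterCofinite_comm (S := S) (by fun_prop) (.of_forall hleft))).exists
  obtain ⟨w, hw, hwleft, hwright⟩ := (hbox.and_eventually (hzw.and (hright z))).exists
  refine ⟨c z, hmaps hz, c w, hmaps hw, ?_⟩
  filter_upwards [hwleft, hwright] with t hl hr ht
  exact ⟨hl ⟨ht, hz⟩, hr ⟨ht, hw⟩⟩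

lemma exists_choosable (G : DefGroup S m) {γ : N → Fin m → N} (hγ : S.Definable γ) {a b : N}
    (hab : a < b) (hmem : MapsTo γ (Ioo a b) G.carrier) (hinj : InjOn γ (Ioo a b)) :
    ∃ p q, p < q ∧ Icc p q ⊆ Ioo a b ∧ Choosable S p q := by
  obtain ⟨x, hx, y, hy, hdiag⟩ := G.exists_eventually_continuousAt_sandwich hγ
    (I := fun t => t ∈ Ioo a b) (by fun_prop) hmem
  let H : N → N → Fin m → N := fun s t => G.sandwich x y (γ s) (γ t)
  have hH : S.Definable (fun z : N × N => H z.1 z.2) := by fun_prop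
  obtain ⟨c, d, hcd, hsub⟩ := (Struc.Definable.frequently_cofinite_iff (S := S) (by fun_prop)).1
    ((frequently_cofinite_of_Ioo hab fun t ht => ht).and_eventually hdiag)
  obtain ⟨c₁, d₁, hcd₁, hsub₁, hright⟩ := exists_Ioo_forall_of_eventually_cofinite (S := S)
    (R := fun t s => ContinuousAt (fun r => H t r) s) (by fun_prop) hcd
    (fun t ht => ((hsub t ht).2 (hsub t ht).1).1)
    fun t _ => (hH.curry_right t).eventually_continuousAt_pi
  obtain ⟨c₂, d₂, hcd₂, hsub₂, hleft⟩ := exists_Ioo_forall_of_eventually_cofinite (S := S)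
    (R := fun s t => ContinuousAt (fun r => H r s) t) (by fun_prop) hcd₁
    (fun t ht => ((hsub t (hsub₁ ht)).2 (hsub t (hsub₁ ht)).1).2)
    fun s _ => Struc.Definable.eventually_continuousAt_pi (S := S) (by fun_prop)
  obtain ⟨p, hcp, hpd⟩ := exists_between hcd₂
  obtain ⟨q, hpq, hqd⟩ := exists_between hpd
  have hIcc : Icc p q ⊆ Ioo c₂ d₂ := Icc_subset_Ioo hcp hqd
  have hIoo {t} (ht : t ∈ Icc p q) : t ∈ Ioo a b := (hsub t (hsub₁ (hsub₂ (hIcc ht)))).1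
  have hH_eq {s t} (hs : s ∈ Icc p q) (ht : t ∈ Icc p q) :=
    sandwich_eq_totalMul_iff hx hy (hmem (hIoo hs)) (hmem (hIoo ht))
  refine ⟨p, q, hpq, fun t ht => hIoo ht, choosable_of_diagonal hH (v := G.totalMul x y)
    (fun t ht => (hH_eq ht ht).2 rfl) (fun s hs t ht hst h => ?_) fun s hs t ht => ⟨?_, ?_⟩⟩
  · exact hst.ne (hinj (hIoo hs) (hIoo ht) ((hH_eq hs ht).1 h))
  · exact hright s (hsub₂ (hIcc hs)) t (hsub₂ (hIcc ht))
  · exact hleft t (hIcc ht) s (hIcc hs)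

lemma exists_choosable_box (G : DefGroup S m) :
    ∃ (s : (Fin (odim G.carrier) → N) → Fin m → N) (a b : Fin (odim G.carrier) → N),
      S.Definable s ∧ (∀ i, a i < b i) ∧ (∀ i, Choosable S (a i) (b i)) ∧
        MapsTo s (box a b) G.carrier ∧ InjOn s (box a b) := by
  obtain ⟨s, a, b, hs, hab, hmaps, hinj⟩ := exists_injOn_box G.carrier_def ⟨_, G.one_mem⟩
  obtain ⟨w₀, hw₀⟩ := box_nonempty hab
  have hupdate (i) {t} (ht : t ∈ Ioo (a i) (b i)) : Function.update w₀ i t ∈ box a b := by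
    refine mem_box.2 fun l => ?_
    obtain rfl | hl := eq_or_ne l i
    · simpa using ht
    · simpa [hl] using mem_box.1 hw₀ l
  have hside (i) : ∃ p q, p < q ∧ Icc p q ⊆ Ioo (a i) (b i) ∧ Choosable S p q :=
    G.exists_choosable (γ := fun t => s (Function.update w₀ i t)) (by fun_prop) (hab i)
      (fun t ht => hmaps (hupdate i ht)) fun t ht t' ht' h =>
        Function.update_injective w₀ i (hinj (hupdate i ht) (hupdate i ht') h)
  choose p q hpq hsub hch using hside
  have hbox : box p q ⊆ box a b := fun w hw =>
    mem_box.2 fun i => hsub i (Ioo_subset_Icc_self (mem_box.1 hw i))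
  exact ⟨s, p, q, hs, hpq, hch, hmaps.mono_left hbox, hinj.mono hbox⟩

end DefGroup

end Choosable

section Selection

variable {N : Type u} [LinearOrder N] [DenselyOrdered N] [NoMinOrder N] [NoMaxOrder N] [Nonempty N]
  [TopologicalSpace N] [OrderTopology N] {S : Struc N} {m : ℕ}

namespace DefGroup

/-- Infinitely many translates of a subset of full dimension cannot be pairwise disjoint. -/
lemma exists_totalMul_eq_totalMul (G : DefGroup S m) {s : (Fin (odim G.carrier) → N) → Fin m → N}
    {a b : Fin (odim G.carrier) → N} (hs : S.Definable s) (hab : ∀ i, a i < b i)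
    (hmaps : MapsTo s (box a b) G.carrier) (hinj : InjOn s (box a b)) {T : N → Prop}
    {γ : N → Fin m → N} (hT : S.Definable T) (hγ : S.Definable γ)
    (hmem : ∀ t, T t → γ t ∈ G.carrier) (hfreq : ∃ᶠ t in cofinite, T t) :
    ∃ t t', T t ∧ T t' ∧ t < t' ∧ ∃ w ∈ box a b, ∃ w' ∈ box a b,
      G.totalMul (γ t) (s w) = G.totalMul (γ t') (s w') := by
  by_contra! hdisj
  let R : (Fin m → N) → N → Prop := fun y t =>
    T t ∧ ∃ w, w ∈ box a b ∧ G.totalMul (γ t) (s w) = y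
  have hfin (y) : {t | R y t}.Subsingleton := by
    rintro t ⟨ht, w, hw, rfl⟩ t' ⟨ht', w', hw', heq⟩
    obtain hlt | rfl | hlt := lt_trichotomy t t'
    · exact absurd heq.symm (hdisj t t' ht ht' hlt w hw w' hw')
    · rfl
    · exact absurd heq (hdisj t' t ht' ht hlt w' hw' w hw)
  refine not_frequently_frequently_injOn G.carrier_def (R := R) (by fun_prop)
    (fun y _ => by simpa only [eventually_cofinite, not_not] using (hfin y).finite)
    (D := fun t w => T t ∧ w ∈ box a b) (by fun_prop) (f := fun t w => G.totalMul (γ t) (s w))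
    (by fun_prop) (fun t w ⟨ht, hw⟩ => ⟨totalMul_mem (hmem t ht) (hmaps hw), ht, w, hw, rfl⟩)
    (fun t w ⟨ht, hw⟩ w' ⟨_, hw'⟩ h =>
      hinj hw hw' (injOn_totalMul_left (hmem t ht) (hmaps hw) (hmaps hw') h)) ?_
  exact hfreq.mono fun t ht => (frequently_iterCofinite_box hab).mono fun w hw => ⟨ht, hw⟩

/-- The value `c g` is found among the `α (g * s w * (s w')⁻¹)`, where `w` and `w'` range over a box
with definable choice. -/
lemma exists_choice_of_frequently (G : DefGroup S m) {α : (Fin m → N) → N}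
    {R : (Fin m → N) → N → Prop} (hα : S.Definable α)
    (hR : S.Definable (fun p : (Fin m → N) × N => R p.1 p.2)) :
    ∃ c : (Fin m → N) → N, S.Definable c ∧ ∀ (T : N → Prop) (γ : N → Fin m → N), S.Definable T →
      S.Definable γ → (∀ t, T t → γ t ∈ G.carrier) → (∃ᶠ t in cofinite, T t) →
      ∃ t t', T t ∧ T t' ∧ t < t' ∧ (R (γ t) (α (γ t')) → R (γ t) (c (γ t))) ∧
        (R (γ t') (α (γ t)) → R (γ t') (c (γ t'))) := by
  obtain ⟨s, a, b, hs, hab, hch, hmaps, hinj⟩ := G.exists_choosable_box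
  let shift : (Fin m → N) → (Fin (odim G.carrier) → N) → (Fin (odim G.carrier) → N) → Fin m → N :=
    fun g w w' => G.totalMul (G.totalMul g (s w)) (G.totalInv (s w'))
  obtain ⟨w, hw, hRw⟩ := exists_choice_box hch
    (R := fun g w => ∃ w', w' ∈ box a b ∧ R g (α (shift g w w'))) (by fun_prop)
  obtain ⟨w', hw', hRw'⟩ := exists_choice_box hch
    (R := fun g w' => R g (α (shift g (w g) w'))) (by fun_prop)
  refine ⟨fun g => α (shift g (w g) (w' g)), by fun_prop, fun T γ hT hγ hmem hfreq => ?_⟩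
  have hchoice {g h : Fin m → N} {u v} (hh : h ∈ G.carrier) (hu : u ∈ box a b) (hv : v ∈ box a b)
      (heq : G.totalMul g (s u) = G.totalMul h (s v)) (hgh : R g (α h)) :
      R g (α (shift g (w g) (w' g))) := by
    have hshift : shift g u v = h := by
      simp only [shift, heq, totalMul_totalMul_totalInv hh (hmaps hv)]
    exact (hRw' g (hRw g ⟨u, hu, v, hv, hshift ▸ hgh⟩).2).2
  obtain ⟨t, t', ht, ht', hlt, u, hu, v, hv, heq⟩ :=
    G.exists_totalMul_eq_totalMul hs hab hmaps hinj hT hγ hmem hfreq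
  exact ⟨t, t', ht, ht', hlt, hchoice (hmem t' ht') hu hv heq,
    hchoice (hmem t ht) hv hu heq.symm⟩

lemma exists_selection (G : DefGroup S m) {α : (Fin m → N) → N} {P R : (Fin m → N) → N → Prop}
    (hα : S.Definable α) (hP : S.Definable (fun p : (Fin m → N) × N => P p.1 p.2))
    (hR : S.Definable (fun p : (Fin m → N) × N => R p.1 p.2))
    (hPR : ∀ g g' b, P g b → P g' b → α g < α g' → R g (α g') ∨ R g' (α g)) :
    ∃ c : (Fin m → N) → N, S.Definable c ∧ ∀ᶠ t in cofinite, ∀ g ∈ G.carrier, α g = t →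
      (∃ᶠ b in cofinite, P g b) → R g (c g) := by
  obtain ⟨c, hc, hpair⟩ := G.exists_choice_of_frequently hα hR
  refine ⟨c, hc, ?_⟩
  by_contra hbad
  obtain ⟨γ, hγ, hfreq⟩ := exists_frequently_choice (S := S) (k := 1)
    (R := fun t g => g ∈ G.carrier ∧ α g = t 0 ∧ (∃ᶠ b in cofinite, P g b) ∧ ¬ R g (c g))
    (by fun_prop) (by
      simpa only [frequently_iterCofinite_succ, frequently_iterCofinite_zero, Fin.cons_zero,
        not_eventually, not_forall, exists_prop] using hbad)
  simp only [frequently_iterCofinite_succ, frequently_iterCofinite_zero, Fin.cons_zero] at hfreq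
  let δ : N → Fin m → N := fun t => γ (Fin.cons t Fin.elim0)
  obtain ⟨b, hb⟩ := exists_frequently_of_frequently_frequently (S := S)
    (R := fun t b => (δ t ∈ G.carrier ∧ α (δ t) = t ∧ ¬ R (δ t) (c (δ t))) ∧ P (δ t) b)
    (by fun_prop) (hfreq.mono fun t ⟨hmem, hαt, hPt, hRt⟩ =>
      hPt.mono fun b hb => ⟨⟨hmem, hαt, hRt⟩, hb⟩)
  obtain ⟨t, t', ⟨⟨-, ht, hRt⟩, hPt⟩, ⟨⟨-, ht', hRt'⟩, hPt'⟩, hlt, hc, hc'⟩ :=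
    hpair _ δ (by fun_prop) (by fun_prop) (fun t ht => ht.1.1) hb
  exact (hPR _ _ b hPt hPt' (by rwa [ht, ht'])).elim (fun h => hRt (hc h)) fun h => hRt' (hc' h)

lemma exists_selection_right (G : DefGroup S m) {α : (Fin m → N) → N} {R : (Fin m → N) → N → Prop}
    (hα : S.Definable α) (hR : S.Definable (fun p : (Fin m → N) × N => R p.1 p.2)) :
    ∃ c : (Fin m → N) → N, S.Definable c ∧ ∀ᶠ t in cofinite, ∀ g ∈ G.carrier, α g = t →
      (∀ᶠ s in 𝓝[>] (α g), R g s) → R g (c g) := by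
  obtain ⟨c, hc, h⟩ := G.exists_selection hα (R := R)
    (P := fun g b => α g < b ∧ ∀ s, s ∈ Ioo (α g) b → R g s) (by fun_prop) hR
    fun g g' b hg hg' hlt => .inl (hg.2 _ ⟨hlt, hg'.1⟩)
  refine ⟨c, hc, h.mono fun t ht g hg hgt hgerm => ht g hg hgt ?_⟩
  obtain ⟨d, hd, hsub⟩ := mem_nhdsGT_iff_exists_Ioo_subset.1 hgerm
  exact frequently_cofinite_of_Ioo hd fun b hb =>
    ⟨hb.1, fun s hs => hsub ⟨hs.1, hs.2.trans hb.2⟩⟩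

lemma exists_selection_left (G : DefGroup S m) {α : (Fin m → N) → N} {R : (Fin m → N) → N → Prop}
    (hα : S.Definable α) (hR : S.Definable (fun p : (Fin m → N) × N => R p.1 p.2)) :
    ∃ c : (Fin m → N) → N, S.Definable c ∧ ∀ᶠ t in cofinite, ∀ g ∈ G.carrier, α g = t →
      (∀ᶠ s in 𝓝[<] (α g), R g s) → R g (c g) := by
  obtain ⟨c, hc, h⟩ := G.exists_selection hα (R := R)
    (P := fun g b => b < α g ∧ ∀ s, s ∈ Ioo b (α g) → R g s) (by fun_prop) hR
    fun g g' b hg hg' hlt => .inr (hg'.2 _ ⟨hg.1, hlt⟩)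
  refine ⟨c, hc, h.mono fun t ht g hg hgt hgerm => ht g hg hgt ?_⟩
  obtain ⟨d, hd, hsub⟩ := mem_nhdsLT_iff_exists_Ioo_subset.1 hgerm
  exact frequently_cofinite_of_Ioo hd fun b hb =>
    ⟨hb.2, fun s hs => hsub ⟨hb.1.trans hs.1, hs.2⟩⟩

end DefGroup

end Selection

section GroupChoice

variable {N : Type u} [LinearOrder N] [DenselyOrdered N] [NoMinOrder N] [NoMaxOrder N] [Nonempty N]
  [TopologicalSpace N] [OrderTopology N] {S : Struc N} {m : ℕ}

namespace DefGroup

section Intervals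

variable (G : DefGroup S m) {α β : (Fin m → N) → N} {R : (Fin m → N) → N → Prop}

lemma exists_choice_of_Ioi (hα : S.Definable α)
    (hR : S.Definable (fun p : (Fin m → N) × N => R p.1 p.2)) :
    ∃ c : (Fin m → N) → N, S.Definable c ∧
      ∀ g ∈ G.carrier, (∀ t ∈ Ioi (α g), R g t) → R g (c g) := by
  obtain ⟨c, hc, hfin⟩ := G.exists_selection_right hα hR
  obtain ⟨d₀, hd₀⟩ := (eventually_cofinite.1 hfin).bddAbove
  obtain ⟨d, hd⟩ := exists_gt d₀
  obtain ⟨e, he, hRe⟩ := Struc.Definable.exists_of_finite hR (c := ![c, fun _ => d])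
    (by simpa [Fin.forall_fin_two] using ⟨hc, by fun_prop⟩)
  refine ⟨e, he, fun g hg hint => hRe g ?_⟩
  refine Fin.exists_fin_two.2 (or_iff_not_imp_left.2 fun hcg => ?_)
  refine hint d ((hd₀ fun hsel => hcg ?_).trans_lt hd)
  exact hsel g hg rfl (eventually_nhdsWithin_of_forall hint)

lemma exists_choice_of_Iio (hβ : S.Definable β)
    (hR : S.Definable (fun p : (Fin m → N) × N => R p.1 p.2)) :
    ∃ c : (Fin m → N) → N, S.Definable c ∧
      ∀ g ∈ G.carrier, (∀ t ∈ Iio (β g), R g t) → R g (c g) := by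
  obtain ⟨c, hc, hfin⟩ := G.exists_selection_left hβ hR
  obtain ⟨d₀, hd₀⟩ := (eventually_cofinite.1 hfin).bddBelow
  obtain ⟨d, hd⟩ := exists_lt d₀
  obtain ⟨e, he, hRe⟩ := Struc.Definable.exists_of_finite hR (c := ![c, fun _ => d])
    (by simpa [Fin.forall_fin_two] using ⟨hc, by fun_prop⟩)
  refine ⟨e, he, fun g hg hint => hRe g ?_⟩
  refine Fin.exists_fin_two.2 (or_iff_not_imp_left.2 fun hcg => ?_)
  refine hint d (hd.trans_le (hd₀ fun hsel => hcg ?_))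
  exact hsel g hg rfl (eventually_nhdsWithin_of_forall hint)

lemma exists_choice_of_Ioo (hα : S.Definable α) (hβ : S.Definable β)
    (hR : S.Definable (fun p : (Fin m → N) × N => R p.1 p.2)) :
    ∃ c : (Fin m → N) → N, S.Definable c ∧
      ∀ g ∈ G.carrier, α g < β g → (∀ t ∈ Ioo (α g) (β g), R g t) → R g (c g) := by
  obtain ⟨c, hc, hright⟩ := G.exists_selection_right hα hR
  obtain ⟨d, hd, hleft⟩ := G.exists_selection_left hβ hR
  have hbetween (z : N × N) : ∃ t, z.1 < z.2 → t ∈ Ioo z.1 z.2 := by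
    by_cases hz : z.1 < z.2
    · exact (exists_between hz).imp fun t ht _ => ht
    · exact ⟨z.1, fun h => absurd h hz⟩
  choose mid hmid using hbetween
  set F : Set (N × N) := {a | ¬ _} ×ˢ {b | ¬ _}
  have : Finite F := ((eventually_cofinite.1 hright).prod (eventually_cofinite.1 hleft)).to_subtype
  obtain ⟨e, he, hRe⟩ := Struc.Definable.exists_of_finite hR
    (c := Sum.elim ![c, d] fun (z : F) _ => mid z)
    (by simpa [Fin.forall_fin_two] using ⟨⟨hc, hd⟩, fun _ _ _ => by fun_prop⟩)
  refine ⟨e, he, fun g hg hlt hint => hRe g ?_⟩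
  by_contra! hnone
  suffices hF : (α g, β g) ∈ F from
    hnone (.inr ⟨_, hF⟩) (hint (mid (α g, β g)) (hmid (α g, β g) hlt))
  refine ⟨fun hsel => hnone (.inl 0) ?_, fun hsel => hnone (.inl 1) ?_⟩
  · exact hsel g hg rfl (mem_of_superset (Ioo_mem_nhdsGT hlt) hint)
  · exact hsel g hg rfl (mem_of_superset (Ioo_mem_nhdsLT hlt) hint)

end Intervals

variable (G : DefGroup S m)

lemma exists_choice_one {R : (Fin m → N) → N → Prop}
    (hR : S.Definable (fun p : (Fin m → N) × N => R p.1 p.2)) :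
    ∃ c : (Fin m → N) → N, S.Definable c ∧ ∀ g ∈ G.carrier, (∃ t, R g t) → R g (c g) := by
  obtain ⟨α, hα, hglb⟩ := Struc.Definable.exists_isGLB hR
  obtain ⟨β, hβ, hglb'⟩ := Struc.Definable.exists_isGLB (S := S) (P := fun g t => ¬ R g t)
    (by fun_prop)
  obtain ⟨b, hb, hsub⟩ := Struc.Definable.exists_Ioo_subset hR hα
  obtain ⟨c₁, hc₁, hIio⟩ := G.exists_choice_of_Iio hβ hR
  obtain ⟨c₂, hc₂, hIoi⟩ := G.exists_choice_of_Ioi hα hR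
  obtain ⟨c₃, hc₃, hIoo⟩ := G.exists_choice_of_Ioo hα hb hR
  obtain ⟨e, he, hRe⟩ := Struc.Definable.exists_of_finite hR
    (c := ![fun _ => Classical.arbitrary N, α, c₁, c₂, c₃])
    (by simpa [Fin.forall_fin_succ] using ⟨by fun_prop, hα, hc₁, hc₂, hc₃⟩)
  refine ⟨e, he, fun g hg hne => ?_⟩
  by_cases hbdd : BddBelow {t | R g t}
  · by_cases hleast : R g (α g)
    · exact hRe g ⟨1, hleast⟩
    have hgerm := (hR.curry_right g).eventually_nhdsGT_of_isGLB (hglb g hne hbdd) hleast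
    by_cases hex : ∃ t, α g < t ∧ ¬ R g t
    · obtain ⟨hlt, hint, -⟩ := hsub g hgerm hex
      exact hRe g ⟨4, hIoo g hg hlt hint⟩
    · push Not at hex
      exact hRe g ⟨3, hIoi g hg hex⟩
  · by_cases hall : ∀ t, R g t
    · exact hRe g ⟨0, hall _⟩
    have hbot : ∀ᶠ t in atBot, R g t :=
      (hR.curry_right g).eventually_atBot_or_not.resolve_right fun hnot => hbdd <| by
        obtain ⟨d, hd⟩ := eventually_atBot.1 hnot
        exact ⟨d, fun t ht => le_of_not_ge fun htd => hd t htd ht⟩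
    obtain ⟨d, hd⟩ := eventually_atBot.1 hbot
    replace hglb' := hglb' g (not_forall.1 hall) ⟨d, fun t ht => le_of_not_ge fun h => ht (hd t h)⟩
    exact hRe g ⟨2, hIio g hg fun t ht => by_contra fun hnot => ht.not_ge (hglb'.1 hnot)⟩

lemma exists_choice {n : ℕ} {R : (Fin m → N) → (Fin n → N) → Prop}
    (hR : S.Definable (fun p : (Fin m → N) × (Fin n → N) => R p.1 p.2)) :
    ∃ c : (Fin m → N) → (Fin n → N), S.Definable c ∧
      ∀ g ∈ G.carrier, (∃ w, R g w) → R g (c g) := by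
  induction n with
  | zero =>
    exact ⟨fun _ => Fin.elim0, by fun_prop, fun g _ ⟨w, hw⟩ => Subsingleton.elim w Fin.elim0 ▸ hw⟩
  | succ n ih =>
    obtain ⟨c, hc, hRc⟩ := G.exists_choice_one (R := fun g t => ∃ w, R g (Fin.cons t w))
      (by fun_prop)
    obtain ⟨d, hd, hRd⟩ := ih (R := fun g w => R g (Fin.cons (c g) w)) (by fun_prop)
    refine ⟨fun g => Fin.cons (c g) (d g), by fun_prop, fun g hg ⟨w, hw⟩ => ?_⟩
    exact hRd g hg (hRc g hg ⟨w 0, Fin.tail w, by rwa [Fin.cons_self_tail]⟩)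

end DefGroup

theorem stmt_1_general (G : DefGroup S m) {n : ℕ} {X : Set (Fin n → N)}
    {j : (Fin n → N) → (Fin m → N)} (hj : S.DefFunOn X j) (hsurj : SurjOn j X G.carrier) :
    ∃ s : (Fin m → N) → (Fin n → N),
      S.DefFunOn G.carrier s ∧ (∀ g ∈ G.carrier, s g ∈ X) ∧ ∀ g ∈ G.carrier, j (s g) = g := by
  obtain ⟨s, hs, hsec⟩ := G.exists_choice (R := fun g u => u ∈ X ∧ j u = g)
    ((definable_of_defFunOn hj).comp
      (f := fun p : (Fin m → N) × (Fin n → N) => (p.2, p.1)) (by fun_prop))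
  replace hsec (g) (hg : g ∈ G.carrier) : s g ∈ X ∧ j (s g) = g := hsec g hg (hsurj hg)
  exact ⟨s, defFunOn_of_definable G.carrier_def hs, fun g hg => (hsec g hg).1,
    fun g hg => (hsec g hg).2⟩

end GroupChoice

/-- every definable extension `1 → A → U →^j G → 1` has a definable
section `s : G → U` with `j (s g) = g` for all `g ∈ G`. -/
theorem stmt_1 {N : Type u} [LinearOrder N] [DenselyOrdered N] [NoMinOrder N]
    [NoMaxOrder N] [Nonempty N] [TopologicalSpace N] [OrderTopology N]
    (S : Struc N) {mA mU mG : ℕ} (A : DefGroup S mA) (U : DefGroup S mU)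
    (G : DefGroup S mG) (i : (Fin mA → N) → (Fin mU → N))
    (j : (Fin mU → N) → (Fin mG → N)) (hext : IsDefExtension A U G i j) :
    ∃ s : (Fin mG → N) → (Fin mU → N),
      S.DefFunOn G.carrier s ∧ (∀ g ∈ G.carrier, s g ∈ U.carrier) ∧
      ∀ g ∈ G.carrier, j (s g) = g := by
  obtain ⟨-, ⟨-, hj, -⟩, -, hsurj, -⟩ := hext
  exact stmt_1_general G hj hsurj.ge
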